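/- Let d ≥ 1 and for each n let Λ_n be the lattice box [−n^{1/d}, n^{1/d}]^d ∩ Z^d with N_n vertices, and let Q(Λ_n) be the matrix Q(Λ_n)_{ij} = 1(‖i−j‖_1 = 1) for i,j ∈ Λ_n. Let β_1, β_2 > 0 and let X ~ P_{β_1,Q(Λ_n)} and Y ~ P_{β_2,Q(Λ_n)} be independent Ising random vectors. Assume (high-temperature hypotheses): (i) for each of X and Y all pairwise covariances are nonnegative and there is a constant c > 0 with Cov(X_i,X_j) ≤ e^{−c‖i−j‖_1} and Cov(Y_i,Y_j) ≤ e^{−c‖i−j‖_1} for all i ≠ j; (ii) the sample means X̄_{N_n} and Ȳ_{N_n} converge to 0 in probability; (iii) (1/N_n) Σ_{i≠j} Cov(X_i,X_j) Cov(Y_i,Y_j) converges to a limit κ. Then κ > 0, √(N_n) · T_{N_n} converges in distribution to N(0, v²) with v² = 1 + κ > 1, and √(N_n) · ρ_{N_n} converges in distribution to the same limit N(0, v²). -/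

import Mathlib

open MeasureTheory ProbabilityTheory Filter Topology Matrix

noncomputable section

/-- The `±1` configuration associated to a boolean configuration. -/
def pmVec {ι : Type*} (s : ι → Bool) : ι → ℝ := fun i => if s i then 1 else -1

/-- Unnormalized Ising weight `exp((β/2) zᵀ Q z)`. -/
def isingWeight {ι : Type*} [Fintype ι] (β : ℝ) (Q : Matrix ι ι ℝ) (z : ι → ℝ) : ℝ :=
  Real.exp (β / 2 * (z ⬝ᵥ Q.mulVec z))

/-- Ising partition function `Z(β,Q)`. -/
def isingZ (ι : Type*) [Fintype ι] [DecidableEq ι] (β : ℝ) (Q : Matrix ι ι ℝ) : ℝ :=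
  ∑ s : ι → Bool, isingWeight β Q (pmVec s)

/-- The Ising probability measure `P_{β,Q}` on `{±1}^ι ⊆ ℝ^ι`:
`P(z) = exp((β/2) zᵀQz) / Z(β,Q)`. -/
def isingMeasure (ι : Type*) [Fintype ι] [DecidableEq ι] (β : ℝ) (Q : Matrix ι ι ℝ) :
    Measure (ι → ℝ) :=
  ∑ s : ι → Bool,
    ENNReal.ofReal (isingWeight β Q (pmVec s) / isingZ ι β Q) • Measure.dirac (pmVec s)

/-- Sample mean `X̄ = (1/n) Σ_i X_i`. -/
def sampleMean {ι : Type*} [Fintype ι] (x : ι → ℝ) : ℝ := (∑ i, x i) / (Fintype.card ι : ℝ)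

/-- Sample covariance `T_n = (1/n) Σ_i (X_i - X̄)(Y_i - Ȳ)`. -/
def sampleCov {ι : Type*} [Fintype ι] (x y : ι → ℝ) : ℝ :=
  (∑ i, (x i - sampleMean x) * (y i - sampleMean y)) / (Fintype.card ι : ℝ)

/-- Convergence in distribution: weak convergence of the laws, tested against
bounded continuous functions. -/
def TendstoInDistribution (μ : ℕ → Measure ℝ) (ν : Measure ℝ) : Prop :=
  ∀ f : BoundedContinuousFunction ℝ ℝ,
    Tendsto (fun n => ∫ x, f x ∂(μ n)) atTop (𝓝 (∫ x, f x ∂ν))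

/-- The Curie–Weiss interaction matrix `Q^{CW} = (1/n)(11ᵀ - I)`. -/
def QCW (n : ℕ) : Matrix (Fin n) (Fin n) ℝ := fun i j => if i = j then 0 else (n : ℝ)⁻¹

/-- `m(β)`: equal to `0` for `β ≤ 1`, and to the unique positive root of
`m = tanh(β m)` for `β > 1`. -/
def isingMag (β : ℝ) : ℝ := sSup {m : ℝ | 0 ≤ m ∧ m = Real.tanh (β * m)}


/-- Sample correlation `ρₙ`. -/
def sampleCorr {ι : Type*} [Fintype ι] (x y : ι → ℝ) : ℝ :=
  (∑ i, (x i - sampleMean x) * (y i - sampleMean y)) /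
    (Real.sqrt (∑ i, (x i - sampleMean x) ^ 2) * Real.sqrt (∑ i, (y i - sampleMean y) ^ 2))

/-- Convergence in probability to a constant, for a sequence of laws on `ℝ`. -/
def TendstoInProbability (μ : ℕ → Measure ℝ) (c : ℝ) : Prop :=
  ∀ ε : ℝ, 0 < ε → Tendsto (fun n => μ n {x | ε ≤ |x - c|}) atTop (𝓝 0)

/-- Covariance of the coordinates `z i` and `z j` under a law `μ` on `ι → ℝ`. -/
def coordCov {ι : Type*} (μ : Measure (ι → ℝ)) (i j : ι) : ℝ :=
  (∫ z, z i * z j ∂μ) - (∫ z, z i ∂μ) * (∫ z, z j ∂μ)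

/-- Radius `⌊n^{1/d}⌋` of the lattice box. -/
def latticeRadius (d n : ℕ) : ℤ := ⌊(n : ℝ) ^ ((1 : ℝ) / d)⌋

/-- The lattice box `Λ_{n,d} = [-n^{1/d}, n^{1/d}]^d ∩ ℤ^d`. -/
def latticeBox (d n : ℕ) : Finset (Fin d → ℤ) :=
  Fintype.piFinset fun _ => Finset.Icc (-(latticeRadius d n)) (latticeRadius d n)

/-- Vertices of the lattice box. -/
abbrev LatticeVertex (d n : ℕ) := {i : Fin d → ℤ // i ∈ latticeBox d n}

/-- `L¹` distance on `ℤ^d`. -/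
def l1dist {d : ℕ} (i j : Fin d → ℤ) : ℤ := ∑ k, |i k - j k|

/-- Number of vertices `N_n` of the lattice box. -/
def latticeN (d n : ℕ) : ℕ := (latticeBox d n).card

/-- Nearest-neighbour interaction matrix `Q(Λ_{n,d})_{ij} = 1(‖i-j‖₁ = 1)`. -/
def latticeQ (d n : ℕ) : Matrix (LatticeVertex d n) (LatticeVertex d n) ℝ :=
  fun i j => if l1dist i.1 j.1 = 1 then 1 else 0

/-- The Ising measure on the lattice box `Λ_{n,d}`. -/
def latticeIsing (d n : ℕ) (β : ℝ) : Measure (LatticeVertex d n → ℝ) :=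
  isingMeasure (LatticeVertex d n) β (latticeQ d n)

/-!
By symmetry the spins have mean zero, so `√N T` differs from `W = N^{-1/2} ∑ X_i Y_i` by
`√N X̄ Ȳ`, and `√N ρ` from `√N T` by at most `√N (X̄² + Ȳ²)`; both errors are `O(N^{-1/2})` in mean,
because summable covariances give `Var X̄ = O(1/N)`. Hence the limit theorem is needed only for `W`,
whose variance is `1 + N^{-1} ∑_{i ≠ j} Cov(X_i, X_j) Cov(Y_i, Y_j)`.

The Ising weights are log-supermodular, so by the FKG inequality the pair `(X, Y)` is positively
associated. The product `X_i Y_i` is not monotone, but its increments are dominated by those of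
the monotone function `X_i + Y_i`; Newman's inequality therefore bounds the failure of the
characteristic function of a sum of block sums to factorize by the covariances of the `X_i + Y_i`
between different blocks. For cubes of side `l`, with the position of the tiling chosen by
averaging, exponential decay makes this at most a constant over `l`, and within blocks a Taylor
expansion suffices since `l^d / √N → 0`.

The limit `κ` is positive because removing the bond between neighbours `i` and `j` leaves a
ferromagnetic model, in which FKG still applies: this yields `Cov(X_i, X_j) ≥ tanh β`.
-/

lemma sum_offDiag_insert {α M : Type*} [DecidableEq α] [AddCommMonoid M] {s : Finset α} {a : α}
    (ha : a ∉ s) (f : α × α → M) :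
    ∑ p ∈ (insert a s).offDiag, f p =
      ∑ p ∈ s.offDiag, f p + ∑ b ∈ s, f (a, b) + ∑ b ∈ s, f (b, a) := by
  rw [Finset.offDiag_insert ha, Finset.sum_union (Finset.disjoint_left.2 (by grind)),
    Finset.sum_union (Finset.disjoint_left.2 (by grind)),
    Finset.sum_product, Finset.sum_product]
  simp only [Finset.sum_singleton]

/-- Positive association of a probability measure on a preordered space: any two increasing
square-integrable functions are nonnegatively correlated. -/
def PositivelyAssociated {Ω : Type*} [Preorder Ω] [MeasurableSpace Ω] (μ : Measure Ω) : Prop :=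
  ∀ f g : Ω → ℝ, Monotone f → Monotone g → MemLp f 2 μ → MemLp g 2 μ → 0 ≤ cov[f, g; μ]

/-- Newman's relation `f ≪ F`: the increments of `f` along the order are dominated in norm by
those of `F`. It lets covariances of arbitrary functions be compared with covariances of
increasing ones. -/
def IncrementBound {Ω E : Type*} [Preorder Ω] [NormedAddCommGroup E] (f : Ω → E) (F : Ω → ℝ) :
    Prop :=
  ∀ ⦃s s'⦄, s ≤ s' → ‖f s' - f s‖ ≤ F s' - F s

lemma norm_exp_ofReal_mul_I_sub_le (x y : ℝ) :
    ‖Complex.exp (x * Complex.I) - Complex.exp (y * Complex.I)‖ ≤ |x - y| := by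
  have factor : Complex.exp (x * Complex.I) - Complex.exp (y * Complex.I) =
      Complex.exp (y * Complex.I) * (Complex.exp (Complex.I * (x - y : ℝ)) - 1) := by
    rw [mul_sub, ← Complex.exp_add, mul_one]
    push_cast
    ring_nf
  rw [factor, norm_mul, Complex.norm_exp_ofReal_mul_I, one_mul]
  exact Real.norm_exp_I_mul_ofReal_sub_one_le

namespace IncrementBound

variable {Ω : Type*} [Preorder Ω]

section NormedGroup

variable {E : Type*} [NormedAddCommGroup E] {f : Ω → E} {F : Ω → ℝ}

lemma monotone (h : IncrementBound f F) : Monotone F := fun _ _ hs =>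
  sub_nonneg.1 ((norm_nonneg _).trans (h hs))

lemma neg (h : IncrementBound f F) : IncrementBound (fun s => -f s) F := fun s s' hs => by
  rw [neg_sub_neg, norm_sub_rev]
  exact h hs

lemma sum {ι : Type*} {A : Finset ι} {f : ι → Ω → E} {F : ι → Ω → ℝ}
    (h : ∀ i ∈ A, IncrementBound (f i) (F i)) :
    IncrementBound (fun s => ∑ i ∈ A, f i s) (fun s => ∑ i ∈ A, F i s) := fun s s' hs => by
  rw [← Finset.sum_sub_distrib, ← Finset.sum_sub_distrib]
  exact norm_sum_le_of_le _ fun i hi => h i hi hs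

end NormedGroup

section Real

variable {f F : Ω → ℝ}

lemma of_monotone (hf : Monotone f) : IncrementBound f f := fun _ _ h => by
  rw [Real.norm_eq_abs, abs_of_nonneg (sub_nonneg.2 (hf h))]

lemma const_mul (h : IncrementBound f F) (a : ℝ) :
    IncrementBound (fun s => a * f s) (fun s => |a| * F s) := fun s s' hs => by
  rw [← mul_sub, ← mul_sub, norm_mul, Real.norm_eq_abs]
  exact mul_le_mul_of_nonneg_left (h hs) (abs_nonneg a)

lemma monotone_sub (h : IncrementBound f F) : Monotone (F - f) := fun s s' hs => by
  have := le_of_abs_le (h hs)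
  simp only [Pi.sub_apply]
  linarith

lemma monotone_add (h : IncrementBound f F) : Monotone (F + f) := fun s s' hs => by
  have := neg_le_of_abs_le (h hs)
  simp only [Pi.add_apply]
  linarith

lemma exp_mul_I (h : IncrementBound f F) :
    IncrementBound (fun s => Complex.exp (f s * Complex.I)) F := fun _ _ hs =>
  (norm_exp_ofReal_mul_I_sub_le _ _).trans (h hs)

lemma prod_mul {Ω' : Type*} [Preorder Ω'] {g G : Ω' → ℝ} (hf : IncrementBound f F)
    (hg : IncrementBound g G) (hf1 : ∀ s, |f s| ≤ 1) (hg1 : ∀ s, |g s| ≤ 1) :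
    IncrementBound (fun p : Ω × Ω' => f p.1 * g p.2) fun p => F p.1 + G p.2 := fun p p' h => by
  have hF := hf h.1
  have hG := hg h.2
  calc ‖f p'.1 * g p'.2 - f p.1 * g p.2‖ =
        ‖(f p'.1 - f p.1) * g p'.2 + f p.1 * (g p'.2 - g p.2)‖ := by ring_nf
    _ ≤ ‖f p'.1 - f p.1‖ * ‖g p'.2‖ + ‖f p.1‖ * ‖g p'.2 - g p.2‖ := by
        rw [← norm_mul, ← norm_mul]; exact norm_add_le _ _
    _ ≤ ‖f p'.1 - f p.1‖ * 1 + 1 * ‖g p'.2 - g p.2‖ := by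
        gcongr
        exacts [hg1 _, hf1 _]
    _ ≤ F p'.1 + G p'.2 - (F p.1 + G p.2) := by linarith

end Real

section Complex

variable {f : Ω → ℂ} {F : Ω → ℝ}

lemma re (h : IncrementBound f F) : IncrementBound (fun s => (f s).re) F := fun _ _ hs =>
  (Complex.abs_re_le_norm _).trans (h hs)

lemma im (h : IncrementBound f F) : IncrementBound (fun s => (f s).im) F := fun _ _ hs =>
  (Complex.abs_im_le_norm _).trans (h hs)

end Complex

end IncrementBound

section ComplexCovariance

variable {Ω : Type*} [MeasurableSpace Ω] {μ : Measure Ω} [IsProbabilityMeasure μ] {f g : Ω → ℂ}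

lemma re_integral_mul_sub (hf : MemLp f 2 μ) (hg : MemLp g 2 μ) :
    (∫ s, f s * g s ∂μ - (∫ s, f s ∂μ) * ∫ s, g s ∂μ).re =
      cov[fun s => (f s).re, fun s => (g s).re; μ] -
        cov[fun s => (f s).im, fun s => (g s).im; μ] := by
  have hfr : MemLp (fun s => (f s).re) 2 μ := hf.re
  have hfi : MemLp (fun s => (f s).im) 2 μ := hf.im
  have hgr : MemLp (fun s => (g s).re) 2 μ := hg.re
  have hgi : MemLp (fun s => (g s).im) 2 μ := hg.im
  have re_mul : (∫ s, f s * g s ∂μ).re =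
      ∫ s, (f s).re * (g s).re ∂μ - ∫ s, (f s).im * (g s).im ∂μ := by
    refine (integral_re (hf.integrable_mul hg)).symm.trans ?_
    exact integral_sub (hfr.integrable_mul hgr) (hfi.integrable_mul hgi)
  have hfre : ∫ s, (f s).re ∂μ = (∫ s, f s ∂μ).re := integral_re (hf.integrable one_le_two)
  have hfim : ∫ s, (f s).im ∂μ = (∫ s, f s ∂μ).im := integral_im (hf.integrable one_le_two)
  have hgre : ∫ s, (g s).re ∂μ = (∫ s, g s ∂μ).re := integral_re (hg.integrable one_le_two)
  have hgim : ∫ s, (g s).im ∂μ = (∫ s, g s ∂μ).im := integral_im (hg.integrable one_le_two)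
  rw [covariance_eq_sub hfr hgr, covariance_eq_sub hfi hgi, Complex.sub_re, Complex.mul_re,
    re_mul, hfre, hfim, hgre, hgim]
  simp only [Pi.mul_apply]
  ring

lemma im_integral_mul_sub (hf : MemLp f 2 μ) (hg : MemLp g 2 μ) :
    (∫ s, f s * g s ∂μ - (∫ s, f s ∂μ) * ∫ s, g s ∂μ).im =
      cov[fun s => (f s).re, fun s => (g s).im; μ] +
        cov[fun s => (f s).im, fun s => (g s).re; μ] := by
  have hfr : MemLp (fun s => (f s).re) 2 μ := hf.re
  have hfi : MemLp (fun s => (f s).im) 2 μ := hf.im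
  have hgr : MemLp (fun s => (g s).re) 2 μ := hg.re
  have hgi : MemLp (fun s => (g s).im) 2 μ := hg.im
  have im_mul : (∫ s, f s * g s ∂μ).im =
      ∫ s, (f s).re * (g s).im ∂μ + ∫ s, (f s).im * (g s).re ∂μ := by
    refine (integral_im (hf.integrable_mul hg)).symm.trans ?_
    exact integral_add (hfr.integrable_mul hgi) (hfi.integrable_mul hgr)
  have hfre : ∫ s, (f s).re ∂μ = (∫ s, f s ∂μ).re := integral_re (hf.integrable one_le_two)
  have hfim : ∫ s, (f s).im ∂μ = (∫ s, f s ∂μ).im := integral_im (hf.integrable one_le_two)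
  have hgre : ∫ s, (g s).re ∂μ = (∫ s, g s ∂μ).re := integral_re (hg.integrable one_le_two)
  have hgim : ∫ s, (g s).im ∂μ = (∫ s, g s ∂μ).im := integral_im (hg.integrable one_le_two)
  rw [covariance_eq_sub hfr hgi, covariance_eq_sub hfi hgr, Complex.sub_im, Complex.mul_im,
    im_mul, hfre, hfim, hgre, hgim]
  simp only [Pi.mul_apply]
  ring

end ComplexCovariance

namespace PositivelyAssociated

variable {Ω : Type*} [Preorder Ω] [MeasurableSpace Ω] {μ : Measure Ω} [IsProbabilityMeasure μ]

lemma covariance_le (hμ : PositivelyAssociated μ) {f g F G : Ω → ℝ} (hfF : IncrementBound f F)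
    (hgG : IncrementBound g G) (hf : MemLp f 2 μ) (hg : MemLp g 2 μ) (hF : MemLp F 2 μ)
    (hG : MemLp G 2 μ) : cov[f, g; μ] ≤ cov[F, G; μ] := by
  have minus_plus : 0 ≤ cov[F - f, G + g; μ] :=
    hμ _ _ hfF.monotone_sub hgG.monotone_add (hF.sub hf) (hG.add hg)
  have plus_minus : 0 ≤ cov[F + f, G - g; μ] :=
    hμ _ _ hfF.monotone_add hgG.monotone_sub (hF.add hf) (hG.sub hg)
  rw [covariance_sub_left hF hf (hG.add hg), covariance_add_right hF hG hg,
    covariance_add_right hf hG hg] at minus_plus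
  rw [covariance_add_left hF hf (hG.sub hg), covariance_sub_right hF hG hg,
    covariance_sub_right hf hG hg] at plus_minus
  linarith

lemma abs_covariance_le (hμ : PositivelyAssociated μ) {f g F G : Ω → ℝ}
    (hfF : IncrementBound f F) (hgG : IncrementBound g G) (hf : MemLp f 2 μ) (hg : MemLp g 2 μ)
    (hF : MemLp F 2 μ) (hG : MemLp G 2 μ) : |cov[f, g; μ]| ≤ cov[F, G; μ] := by
  refine abs_le'.2 ⟨hμ.covariance_le hfF hgG hf hg hF hG, ?_⟩
  rw [← covariance_neg_left]
  exact hμ.covariance_le hfF.neg hgG hf.neg hg hF hG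

lemma norm_integral_mul_sub_le (hμ : PositivelyAssociated μ) {f g : Ω → ℂ} {F G : Ω → ℝ}
    (hfF : IncrementBound f F) (hgG : IncrementBound g G) (hf : MemLp f 2 μ) (hg : MemLp g 2 μ)
    (hF : MemLp F 2 μ) (hG : MemLp G 2 μ) :
    ‖∫ s, f s * g s ∂μ - (∫ s, f s ∂μ) * ∫ s, g s ∂μ‖ ≤ 4 * cov[F, G; μ] := by
  have hfr : MemLp (fun s => (f s).re) 2 μ := hf.re
  have hfi : MemLp (fun s => (f s).im) 2 μ := hf.im
  have hgr : MemLp (fun s => (g s).re) 2 μ := hg.re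
  have hgi : MemLp (fun s => (g s).im) 2 μ := hg.im
  have rr := hμ.abs_covariance_le hfF.re hgG.re hfr hgr hF hG
  have ri := hμ.abs_covariance_le hfF.re hgG.im hfr hgi hF hG
  have ir := hμ.abs_covariance_le hfF.im hgG.re hfi hgr hF hG
  have ii := hμ.abs_covariance_le hfF.im hgG.im hfi hgi hF hG
  refine (Complex.norm_le_abs_re_add_abs_im _).trans ?_
  rw [re_integral_mul_sub hf hg, im_integral_mul_sub hf hg]
  exact (add_le_add (abs_sub _ _) (abs_add_le _ _)).trans (by linarith)

lemma norm_integral_exp_mul_exp_sub_le (hμ : PositivelyAssociated μ) {u v U V : Ω → ℝ}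
    (huU : IncrementBound u U) (hvV : IncrementBound v V) (hu : AEMeasurable u μ)
    (hv : AEMeasurable v μ) (hU : MemLp U 2 μ) (hV : MemLp V 2 μ) :
    ‖∫ s, Complex.exp (u s * Complex.I) * Complex.exp (v s * Complex.I) ∂μ -
        (∫ s, Complex.exp (u s * Complex.I) ∂μ) * ∫ s, Complex.exp (v s * Complex.I) ∂μ‖ ≤
      4 * cov[U, V; μ] := by
  have exp_memLp {w : Ω → ℝ} (hw : AEMeasurable w μ) :
      MemLp (fun s => Complex.exp (w s * Complex.I)) 2 μ :=
    .of_bound (AEMeasurable.aestronglyMeasurable (by fun_prop)) 1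
      (.of_forall fun s => (Complex.norm_exp_ofReal_mul_I _).le)
  exact hμ.norm_integral_mul_sub_le huU.exp_mul_I hvV.exp_mul_I (exp_memLp hu) (exp_memLp hv) hU hV

/-- Newman's inequality. -/
lemma norm_integral_exp_sum_sub_prod_le (hμ : PositivelyAssociated μ) {B : Type*}
    {u V : B → Ω → ℝ} (huV : ∀ b, IncrementBound (u b) (V b))
    (hu : ∀ b, AEMeasurable (u b) μ) (hV : ∀ b, MemLp (V b) 2 μ) (A : Finset B) :
    ‖∫ s, Complex.exp ((∑ b ∈ A, u b s : ℝ) * Complex.I) ∂μ -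
        ∏ b ∈ A, ∫ s, Complex.exp (u b s * Complex.I) ∂μ‖ ≤
      4 * ∑ p ∈ A.offDiag, cov[V p.1, V p.2; μ] := by
  classical
  induction A using Finset.induction_on with
  | empty => simp
  | insert c A hc ih =>
    simp only [Finset.prod_insert hc, Finset.sum_insert hc, Complex.ofReal_add, add_mul,
      Complex.exp_add]
    set E := ∫ s, Complex.exp (u c s * Complex.I) ∂μ
    set P := ∫ s, Complex.exp ((∑ b ∈ A, u b s : ℝ) * Complex.I) ∂μ
    have split_off : ‖∫ s, Complex.exp (u c s * Complex.I) *
        Complex.exp ((∑ b ∈ A, u b s : ℝ) * Complex.I) ∂μ - E * P‖ ≤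
          4 * ∑ b ∈ A, cov[V c, V b; μ] := by
      rw [← covariance_fun_sum_right' (fun b _ => hV b) (hV c)]
      exact hμ.norm_integral_exp_mul_exp_sub_le (huV c) (.sum fun b _ => huV b) (hu c)
        (Finset.aemeasurable_fun_sum _ fun b _ => hu b) (hV c)
        (memLp_finsetSum A fun b _ => hV b)
    have norm_E_le : ‖E‖ ≤ 1 := by
      simpa using norm_integral_le_of_norm_le_const (μ := μ)
        (.of_forall fun s => (Complex.norm_exp_ofReal_mul_I (u c s)).le)
    have cov_nonneg : 0 ≤ ∑ b ∈ A, cov[V b, V c; μ] := Finset.sum_nonneg fun b _ =>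
      hμ _ _ (huV b).monotone (huV c).monotone (hV b) (hV c)
    calc _ ≤ ‖_ - E * P‖ + ‖E * P - E * ∏ b ∈ A, ∫ s, Complex.exp (u b s * Complex.I) ∂μ‖ :=
          norm_sub_le_norm_sub_add_norm_sub _ _ _
      _ ≤ 4 * ∑ b ∈ A, cov[V c, V b; μ] + 4 * ∑ p ∈ A.offDiag, cov[V p.1, V p.2; μ] := by
          rw [← mul_sub, norm_mul]
          exact add_le_add split_off
            ((mul_le_of_le_one_left (norm_nonneg _) norm_E_le).trans ih)
      _ ≤ 4 * ∑ p ∈ (insert c A).offDiag, cov[V p.1, V p.2; μ] := by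
          rw [sum_offDiag_insert hc]
          linarith

end PositivelyAssociated

section Fibers

variable {ι B M : Type*} [Fintype ι] [DecidableEq B] [AddCommMonoid M]

lemma sum_image_sum_fiber (b : ι → B) (f : ι → ι → M) :
    ∑ β ∈ Finset.univ.image b, ∑ i with b i = β, ∑ j with b j = β, f i j =
      ∑ i, ∑ j with b j = b i, f i j := by
  rw [← Finset.sum_fiberwise_of_maps_to (fun i _ => Finset.mem_image_of_mem b (Finset.mem_univ i))]
  refine Finset.sum_congr rfl fun β _ => Finset.sum_congr rfl fun i hi => ?_
  rw [(Finset.mem_filter.1 hi).2]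

lemma sum_offDiag_image_sum_fiber (b : ι → B) (f : ι → ι → M) :
    ∑ p ∈ (Finset.univ.image b).offDiag, ∑ i with b i = p.1, ∑ j with b j = p.2, f i j =
      ∑ i, ∑ j with b j ≠ b i, f i j := by
  have maps_to : ∀ q ∈ Finset.univ.filter (fun q : ι × ι => b q.2 ≠ b q.1),
      (b q.1, b q.2) ∈ (Finset.univ.image b).offDiag := fun q hq => by
    simp only [Finset.mem_offDiag, Finset.mem_image_of_mem b (Finset.mem_univ _), true_and]
    exact (Finset.mem_filter.1 hq).2.symm
  have pairs : ∑ i, ∑ j with b j ≠ b i, f i j =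
      ∑ q : ι × ι with b q.2 ≠ b q.1, f q.1 q.2 := by
    simp only [Finset.sum_filter, Fintype.sum_prod_type]
  rw [pairs, ← Finset.sum_fiberwise_of_maps_to maps_to]
  refine Finset.sum_congr rfl fun p hp => ?_
  rw [← Finset.sum_product']
  refine Finset.sum_congr ?_ fun _ _ => rfl
  ext q
  have := (Finset.mem_offDiag.1 hp).2.2
  simp only [Finset.mem_product, Finset.mem_filter, Finset.mem_univ, true_and, Prod.ext_iff]
  grind

end Fibers

lemma norm_prod_sub_prod_le {B : Type*} (A : Finset B) {f g : B → ℂ}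
    (hf : ∀ b, ‖f b‖ ≤ 1) (hg : ∀ b, ‖g b‖ ≤ 1) :
    ‖∏ b ∈ A, f b - ∏ b ∈ A, g b‖ ≤ ∑ b ∈ A, ‖f b - g b‖ := by
  classical
  induction A using Finset.induction_on with
  | empty => simp
  | insert c A hc ih =>
    rw [Finset.prod_insert hc, Finset.prod_insert hc, Finset.sum_insert hc]
    have telescope : f c * ∏ b ∈ A, f b - g c * ∏ b ∈ A, g b =
        (f c - g c) * ∏ b ∈ A, f b + g c * (∏ b ∈ A, f b - ∏ b ∈ A, g b) := by ring
    have norm_prod_le : ‖∏ b ∈ A, f b‖ ≤ 1 := by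
      rw [norm_prod]
      exact Finset.prod_le_one (fun _ _ => norm_nonneg _) fun b _ => hf b
    rw [telescope]
    refine (norm_add_le _ _).trans (add_le_add ?_ ?_) <;> rw [norm_mul]
    · exact mul_le_of_le_one_right (norm_nonneg _) norm_prod_le
    · exact (mul_le_of_le_one_left (norm_nonneg _) (hg c)).trans ih

lemma norm_exp_ofReal_mul_I_sub_taylor_le {x : ℝ} (hx : |x| ≤ 1) :
    ‖Complex.exp (x * Complex.I) - (1 + x * Complex.I - (x ^ 2 / 2 : ℝ))‖ ≤ |x| * x ^ 2 := by
  have norm_arg : ‖(x : ℂ) * Complex.I‖ = |x| := by simp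
  have remainder := Complex.exp_bound (x := x * Complex.I) (by rwa [norm_arg])
    (n := 3) (by norm_num)
  have partial_sum : ∑ m ∈ Finset.range 3, ((x : ℂ) * Complex.I) ^ m / m.factorial =
      1 + x * Complex.I - (x ^ 2 / 2 : ℝ) := by
    simp only [Finset.sum_range_succ, Finset.sum_range_zero, Nat.factorial, mul_pow, Complex.I_sq]
    push_cast
    ring
  rw [partial_sum, norm_arg] at remainder
  refine remainder.trans ?_
  rw [← sq_abs x, ← pow_succ']
  refine mul_le_of_le_one_right (by positivity) ?_
  norm_num [Nat.factorial]

lemma abs_exp_neg_sub_exp_neg_le {x y : ℝ} (hx : 0 ≤ x) (hy : 0 ≤ y) :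
    |Real.exp (-x) - Real.exp (-y)| ≤ |x - y| := by
  wlog hxy : x ≤ y generalizing x y
  · rw [abs_sub_comm, abs_sub_comm x]
    exact this hy hx (le_of_not_ge hxy)
  rw [abs_of_nonneg (by simpa using hxy), abs_sub_comm, abs_of_nonneg (sub_nonneg.2 hxy)]
  calc Real.exp (-x) - Real.exp (-y) = Real.exp (-x) * (1 - Real.exp (-(y - x))) := by
        rw [mul_sub, mul_one, ← Real.exp_add]; ring_nf
    _ ≤ 1 - Real.exp (-(y - x)) :=
        mul_le_of_le_one_left (by simpa using hxy) (by simpa using hx)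
    _ ≤ y - x := by linarith [Real.add_one_le_exp (-(y - x))]

section Blocks

variable {Ω : Type*} [MeasurableSpace Ω] {μ : Measure Ω} [IsProbabilityMeasure μ]

lemma norm_integral_exp_sub_one_sub_variance_le {x : Ω → ℝ} (hx : AEMeasurable x μ)
    (hmean : ∫ s, x s ∂μ = 0) {δ : ℝ} (hδ : δ ≤ 1) (hxδ : ∀ s, |x s| ≤ δ) :
    ‖∫ s, Complex.exp (x s * Complex.I) ∂μ - (1 - Var[x; μ] / 2 : ℝ)‖ ≤ δ * Var[x; μ] := by
  have hmem : MemLp x 2 μ := .of_bound hx.aestronglyMeasurable δ (.of_forall hxδ)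
  have hvar : Var[x; μ] = ∫ s, x s ^ 2 ∂μ := variance_of_integral_eq_zero hx hmean
  have hint : Integrable (fun s => (x s : ℂ) * Complex.I) μ :=
    (hmem.integrable one_le_two).ofReal.mul_const _
  have hint_linear : Integrable (fun s => 1 + (x s : ℂ) * Complex.I) μ :=
    (integrable_const 1).add hint
  have hint_sq : Integrable (fun s => ((x s ^ 2 / 2 : ℝ) : ℂ)) μ :=
    (hmem.integrable_sq.div_const 2).ofReal
  have hint_exp : Integrable (fun s => Complex.exp (x s * Complex.I)) μ :=
    .of_bound (AEMeasurable.aestronglyMeasurable (by fun_prop)) 1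
      (.of_forall fun s => (Complex.norm_exp_ofReal_mul_I _).le)
  have integral_taylor : ∫ s, (1 + x s * Complex.I - (x s ^ 2 / 2 : ℝ)) ∂μ =
      (1 - Var[x; μ] / 2 : ℝ) := by
    rw [integral_sub hint_linear hint_sq, integral_add (integrable_const 1) hint,
      integral_mul_const, integral_complex_ofReal, integral_complex_ofReal, hmean, integral_div,
      hvar]
    simp
  have hint_taylor : Integrable (fun s => 1 + x s * Complex.I - ((x s ^ 2 / 2 : ℝ) : ℂ)) μ :=
    hint_linear.sub hint_sq
  rw [← integral_taylor, ← integral_sub hint_exp hint_taylor, hvar, ← integral_const_mul]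
  refine norm_integral_le_of_norm_le (hmem.integrable_sq.const_mul δ) (.of_forall fun s => ?_)
  exact (norm_exp_ofReal_mul_I_sub_taylor_le ((hxδ s).trans hδ)).trans
    (mul_le_mul_of_nonneg_right (hxδ s) (sq_nonneg _))

lemma norm_integral_exp_sub_exp_variance_le {x : Ω → ℝ} (hx : AEMeasurable x μ)
    (hmean : ∫ s, x s ∂μ = 0) {δ : ℝ} (hδ : δ ≤ 1) (hxδ : ∀ s, |x s| ≤ δ) :
    ‖∫ s, Complex.exp (x s * Complex.I) ∂μ - (Real.exp (-(Var[x; μ] / 2)) : ℂ)‖ ≤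
      2 * δ * Var[x; μ] := by
  have hδ0 : 0 ≤ δ := by
    obtain ⟨s⟩ := nonempty_of_isProbabilityMeasure μ
    exact (abs_nonneg _).trans (hxδ s)
  have variance_le : Var[x; μ] ≤ δ ^ 2 := by
    have := variance_le_sq_of_bounded (.of_forall fun s => abs_le.1 (hxδ s)) hx
    rwa [sub_neg_eq_add, add_self_div_two] at this
  have variance_nonneg := variance_nonneg x μ
  have exp_taylor : |Real.exp (-(Var[x; μ] / 2)) - (1 - Var[x; μ] / 2)| ≤ δ * Var[x; μ] := by
    have := Real.abs_exp_sub_one_sub_id_le (x := -(Var[x; μ] / 2))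
      (by rw [abs_neg, abs_of_nonneg] <;> nlinarith)
    rw [sub_sub, ← sub_eq_add_neg] at this
    nlinarith
  calc _ ≤ _ := norm_sub_le_norm_sub_add_norm_sub _ ((1 - Var[x; μ] / 2 : ℝ) : ℂ) _
    _ ≤ δ * Var[x; μ] + δ * Var[x; μ] := by
        refine add_le_add (norm_integral_exp_sub_one_sub_variance_le hx hmean hδ hxδ) ?_
        rwa [← Complex.ofReal_sub, Complex.norm_real, Real.norm_eq_abs, abs_sub_comm]
    _ = 2 * δ * Var[x; μ] := by ring

lemma variance_fun_sum_eq_add_offDiag {B : Type*} {A : Finset B} {u : B → Ω → ℝ}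
    (hu : ∀ b ∈ A, MemLp (u b) 2 μ) :
    Var[fun s => ∑ b ∈ A, u b s; μ] =
      ∑ b ∈ A, Var[u b; μ] + ∑ p ∈ A.offDiag, cov[u p.1, u p.2; μ] := by
  classical
  rw [variance_fun_sum' hu, ← Finset.sum_product', ← Finset.diag_union_offDiag,
    Finset.sum_union (Finset.disjoint_diag_offDiag _), Finset.sum_diag]
  congr 1
  exact Finset.sum_congr rfl fun b hb => covariance_self (hu b hb).aemeasurable

variable [Preorder Ω]

lemma PositivelyAssociated.abs_exp_variance_sum_sub_le (hμ : PositivelyAssociated μ)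
    {B : Type*} {u V : B → Ω → ℝ} (huV : ∀ b, IncrementBound (u b) (V b))
    (hu : ∀ b, MemLp (u b) 2 μ) (hV : ∀ b, MemLp (V b) 2 μ) (A : Finset B) :
    |∏ b ∈ A, Real.exp (-(Var[u b; μ] / 2)) -
        Real.exp (-(Var[fun s => ∑ b ∈ A, u b s; μ] / 2))| ≤
      ∑ p ∈ A.offDiag, cov[V p.1, V p.2; μ] := by
  rw [← Real.exp_sum, Finset.sum_neg_distrib]
  refine (abs_exp_neg_sub_exp_neg_le
    (Finset.sum_nonneg fun b _ => div_nonneg (variance_nonneg _ _) zero_le_two)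
    (div_nonneg (variance_nonneg _ _) zero_le_two)).trans ?_
  rw [variance_fun_sum_eq_add_offDiag fun b _ => hu b, ← Finset.sum_div, ← sub_div,
    sub_add_cancel_left, neg_div, abs_neg, abs_div, abs_two]
  refine (half_le_self (abs_nonneg _)).trans ((Finset.abs_sum_le_sum_abs _ _).trans ?_)
  exact Finset.sum_le_sum fun p _ =>
    hμ.abs_covariance_le (huV _) (huV _) (hu _) (hu _) (hV _) (hV _)

/-- Independent blocks would give the product of the characteristic functions exactly; positive
association controls the error by the covariances between blocks. -/
lemma PositivelyAssociated.norm_integral_exp_sum_sub_le (hμ : PositivelyAssociated μ)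
    {B : Type*} {u V : B → Ω → ℝ} (huV : ∀ b, IncrementBound (u b) (V b))
    (hu : ∀ b, AEMeasurable (u b) μ) (hV : ∀ b, MemLp (V b) 2 μ) (hmean : ∀ b, ∫ s, u b s ∂μ = 0)
    {δ : ℝ} (hδ : δ ≤ 1) (hδ0 : 0 ≤ δ) (huδ : ∀ b s, |u b s| ≤ δ) (A : Finset B) :
    ‖∫ s, Complex.exp ((∑ b ∈ A, u b s : ℝ) * Complex.I) ∂μ -
        (Real.exp (-(Var[fun s => ∑ b ∈ A, u b s; μ] / 2)) : ℂ)‖ ≤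
      5 * ∑ p ∈ A.offDiag, cov[V p.1, V p.2; μ] + 2 * δ * ∑ b ∈ A, Var[V b; μ] := by
  have hmem (b : B) : MemLp (u b) 2 μ :=
    .of_bound (hu b).aestronglyMeasurable δ (.of_forall (huδ b))
  have variance_le (b : B) : Var[u b; μ] ≤ Var[V b; μ] := by
    rw [← covariance_self (hu b), ← covariance_self (hV b).aemeasurable]
    exact hμ.covariance_le (huV b) (huV b) (hmem b) (hmem b) (hV b) (hV b)
  have factorization := hμ.norm_integral_exp_sum_sub_prod_le huV hu hV A
  have gaussian_blocks : ‖∏ b ∈ A, ∫ s, Complex.exp (u b s * Complex.I) ∂μ -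
      ∏ b ∈ A, (Real.exp (-(Var[u b; μ] / 2)) : ℂ)‖ ≤ 2 * δ * ∑ b ∈ A, Var[V b; μ] := by
    refine (norm_prod_sub_prod_le A (fun b => ?_) fun b => ?_).trans ?_
    · simpa using norm_integral_le_of_norm_le_const (μ := μ)
        (.of_forall fun s => (Complex.norm_exp_ofReal_mul_I (u b s)).le)
    · rw [Complex.norm_real, Real.norm_eq_abs, Real.abs_exp, Real.exp_le_one_iff]
      linarith [variance_nonneg (u b) μ]
    · rw [Finset.mul_sum]
      exact Finset.sum_le_sum fun b _ =>
        (norm_integral_exp_sub_exp_variance_le (hu b) (hmean b) hδ (huδ b)).trans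
          (mul_le_mul_of_nonneg_left (variance_le b) (by positivity))
  have variance_split : ‖∏ b ∈ A, (Real.exp (-(Var[u b; μ] / 2)) : ℂ) -
      (Real.exp (-(Var[fun s => ∑ b ∈ A, u b s; μ] / 2)) : ℂ)‖ ≤
        ∑ p ∈ A.offDiag, cov[V p.1, V p.2; μ] := by
    rw [← Complex.ofReal_prod, ← Complex.ofReal_sub, Complex.norm_real]
    exact hμ.abs_exp_variance_sum_sub_le huV hmem hV A
  refine (norm_sub_le_norm_sub_add_norm_sub _ _ _).trans ((add_le_add factorization
    ((norm_sub_le_norm_sub_add_norm_sub _ _ _).trans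
      (add_le_add gaussian_blocks variance_split))).trans ?_)
  linarith

lemma PositivelyAssociated.norm_integral_exp_sum_sub_le_of_blocks (hμ : PositivelyAssociated μ)
    {ι B : Type*} [Fintype ι] [DecidableEq B] {X V : ι → Ω → ℝ}
    (hXV : ∀ i, IncrementBound (X i) (V i)) (hX : ∀ i, AEMeasurable (X i) μ)
    (hV : ∀ i, MemLp (V i) 2 μ) (hmean : ∀ i, ∫ s, X i s ∂μ = 0) {ε : ℝ} (hε : 0 ≤ ε)
    (hXε : ∀ i s, |X i s| ≤ ε) (b : ι → B) {m : ℕ}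
    (hb : ∀ β, (Finset.univ.filter fun i => b i = β).card ≤ m) (hεm : ε * m ≤ 1) :
    ‖∫ s, Complex.exp ((∑ i, X i s : ℝ) * Complex.I) ∂μ -
        (Real.exp (-(Var[fun s => ∑ i, X i s; μ] / 2)) : ℂ)‖ ≤
      5 * ∑ i, ∑ j with b j ≠ b i, cov[V i, V j; μ] +
        2 * (ε * m) * ∑ i, ∑ j, cov[V i, V j; μ] := by
  let u (β : B) (s : Ω) : ℝ := ∑ i with b i = β, X i s
  let W (β : B) (s : Ω) : ℝ := ∑ i with b i = β, V i s
  have sum_u (s : Ω) : ∑ β ∈ Finset.univ.image b, u β s = ∑ i, X i s :=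
    Finset.sum_fiberwise_of_maps_to (fun i _ => Finset.mem_image_of_mem b (Finset.mem_univ i)) _
  have cov_W (β γ : B) :
      cov[W β, W γ; μ] = ∑ i with b i = β, ∑ j with b j = γ, cov[V i, V j; μ] :=
    covariance_fun_sum_fun_sum' (fun i _ => hV i) fun j _ => hV j
  have var_W (β : B) :
      Var[W β; μ] = ∑ i with b i = β, ∑ j with b j = β, cov[V i, V j; μ] := by
    rw [← cov_W, covariance_self (memLp_finsetSum _ fun i _ => hV i).aemeasurable]
  have abs_u_le (β : B) (s : Ω) : |u β s| ≤ ε * m := by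
    refine (Finset.abs_sum_le_sum_abs _ _).trans
      ((Finset.sum_le_card_nsmul _ _ ε fun i _ => hXε i s).trans ?_)
    rw [nsmul_eq_mul, mul_comm]
    exact mul_le_mul_of_nonneg_left (Nat.cast_le.2 (hb β)) hε
  have X_integrable (i : ι) : Integrable (X i) μ :=
    .of_bound (hX i).aestronglyMeasurable ε (.of_forall (hXε i))
  have block_estimate := hμ.norm_integral_exp_sum_sub_le
    (fun β => IncrementBound.sum fun i (_ : i ∈ Finset.univ.filter (b · = β)) => hXV i)
    (fun β => Finset.aemeasurable_fun_sum _ fun i _ => hX i)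
    (fun β => memLp_finsetSum _ fun i _ => hV i)
    (fun β => by
      rw [integral_finsetSum _ fun i _ => X_integrable i]
      simp only [hmean, Finset.sum_const_zero])
    hεm (by positivity) abs_u_le (Finset.univ.image b)
  have within_blocks : ∑ β ∈ Finset.univ.image b, Var[W β; μ] ≤ ∑ i, ∑ j, cov[V i, V j; μ] := by
    simp only [var_W, sum_image_sum_fiber b fun i j => cov[V i, V j; μ]]
    exact Finset.sum_le_sum fun i _ => Finset.sum_le_sum_of_subset_of_nonneg
      (Finset.filter_subset _ _) fun j _ _ =>
        hμ _ _ (hXV i).monotone (hXV j).monotone (hV i) (hV j)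
  simp only [← sum_u]
  refine block_estimate.trans (add_le_add (le_of_eq ?_)
    (mul_le_mul_of_nonneg_left within_blocks (by positivity)))
  rw [← sum_offDiag_image_sum_fiber b fun i j => cov[V i, V j; μ]]
  simp only [← cov_W]
  rfl

end Blocks

/-- Log-supermodularity of the point masses of a measure on a lattice, the hypothesis of the
Fortuin–Kasteleyn–Ginibre inequality. -/
def IsLogSupermodular {Ω : Type*} [Lattice Ω] [MeasurableSpace Ω] (μ : Measure Ω) : Prop :=
  ∀ a b, μ.real {a} * μ.real {b} ≤ μ.real {a ⊓ b} * μ.real {a ⊔ b}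

namespace IsLogSupermodular

lemma prod {Ω Ω' : Type*} [Lattice Ω] [Lattice Ω'] [MeasurableSpace Ω] [MeasurableSpace Ω']
    {μ : Measure Ω} {ν : Measure Ω'} [SFinite ν] (hμ : IsLogSupermodular μ)
    (hν : IsLogSupermodular ν) : IsLogSupermodular (μ.prod ν) := fun a b => by
  have prod_real (p : Ω × Ω') : (μ.prod ν).real {p} = μ.real {p.1} * ν.real {p.2} := by
    rw [← measureReal_prod_prod, Set.singleton_prod_singleton]
  simp only [prod_real, Prod.fst_inf, Prod.snd_inf, Prod.fst_sup, Prod.snd_sup]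
  calc _ = (μ.real {a.1} * μ.real {b.1}) * (ν.real {a.2} * ν.real {b.2}) := by ring
    _ ≤ _ := mul_le_mul (hμ a.1 b.1) (hν a.2 b.2) (by positivity) (by positivity)
    _ = _ := by ring

variable {Ω : Type*} [DistribLattice Ω] [Finite Ω] [MeasurableSpace Ω] [DiscreteMeasurableSpace Ω]
  {μ : Measure Ω} [IsProbabilityMeasure μ]

lemma covariance_nonneg_of_nonneg (hμ : IsLogSupermodular μ) {f g : Ω → ℝ} (hf0 : 0 ≤ f)
    (hg0 : 0 ≤ g) (hf : Monotone f) (hg : Monotone g) : 0 ≤ cov[f, g; μ] := by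
  have := Fintype.ofFinite Ω
  have fkg_ineq := fkg (μ := fun s => μ.real {s}) (f := f) (g := g) (fun _ => measureReal_nonneg)
    hf0 hg0 hf hg hμ
  have total_mass : ∑ s, μ.real {s} = 1 := by simp
  rw [total_mass, one_mul] at fkg_ineq
  rw [covariance_eq_sub .of_discrete .of_discrete, integral_fintype .of_finite,
    integral_fintype .of_finite, integral_fintype .of_finite]
  exact sub_nonneg.2 fkg_ineq

lemma positivelyAssociated (hμ : IsLogSupermodular μ) : PositivelyAssociated μ := by
  intro f g hf hg hf2 hg2
  obtain ⟨a, ha⟩ := (Set.finite_range f).bddBelow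
  obtain ⟨b, hb⟩ := (Set.finite_range g).bddBelow
  rw [← covariance_sub_const_left (hf2.integrable one_le_two) a,
    ← covariance_sub_const_right (hg2.integrable one_le_two) b]
  exact hμ.covariance_nonneg_of_nonneg (fun s => sub_nonneg.2 (ha (Set.mem_range_self s)))
    (fun s => sub_nonneg.2 (hb (Set.mem_range_self s))) (fun _ _ h => sub_le_sub_right (hf h) a)
    fun _ _ h => sub_le_sub_right (hg h) b

end IsLogSupermodular

lemma l1dist_self {d : ℕ} (i : Fin d → ℤ) : l1dist i i = 0 := by simp [l1dist]

lemma l1dist_comm {d : ℕ} (i j : Fin d → ℤ) : l1dist i j = l1dist j i :=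
  Finset.sum_congr rfl fun _ _ => abs_sub_comm _ _

lemma l1dist_nonneg {d : ℕ} (i j : Fin d → ℤ) : 0 ≤ l1dist i j :=
  Finset.sum_nonneg fun _ _ => abs_nonneg _

lemma card_shift_ediv_ne_le (l : ℕ) (x y : ℤ) :
    (((Finset.range l).filter fun a : ℕ => (x + a) / (l : ℤ) ≠ (y + a) / l).card : ℤ) ≤
      |x - y| := by
  wlog hxy : x ≤ y generalizing x y
  · simpa only [ne_comm, abs_sub_comm] using this y x (le_of_not_ge hxy)
  -- `a` separates `x` from `y` only if some `w ∈ (x, y]` has `w + a` divisible by `l`.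
  have card_le : ((Finset.range l).filter fun a : ℕ => (x + a) / (l : ℤ) ≠ (y + a) / l).card ≤
      (Finset.Ioc x y).card := by
    refine Finset.card_le_card_of_injOn (fun a : ℕ => l * ((y + a) / l) - a) ?_ ?_
    · intro a ha
      obtain ⟨hal, hne⟩ := Finset.mem_filter.1 ha
      have hl : (0 : ℤ) < l := by have := Finset.mem_range.1 hal; omega
      have hlt : (x + a) / (l : ℤ) < (y + a) / l :=
        lt_of_le_of_ne (Int.ediv_le_ediv hl (by linarith)) hne
      have hx := (Int.ediv_lt_iff_lt_mul hl).1 hlt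
      have hy := Int.mul_ediv_self_le (x := y + a) hl.ne'
      rw [Finset.mem_coe, Finset.mem_Ioc]
      constructor <;> linarith
    · intro a ha b hb hab
      have hal := Finset.mem_range.1 (Finset.mem_filter.1 ha).1
      have hbl := Finset.mem_range.1 (Finset.mem_filter.1 hb).1
      have hmod : (a : ℤ) ≡ b [ZMOD l] := by
        refine Int.modEq_iff_dvd.2 ⟨(y + b) / l - (y + a) / l, ?_⟩
        simp only at hab
        linarith
      exact ((Int.natCast_modEq_iff.1 hmod).eq_of_lt_of_lt hal hbl)
  rw [abs_sub_comm, abs_of_nonneg (sub_nonneg.2 hxy)]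
  rw [Int.card_Ioc] at card_le
  omega

/-- The index of the cube of side `l` containing `i`, for the tiling of `ℤ^d` by such cubes
translated by `-a` in every coordinate. -/
def shiftedBlock {d : ℕ} (l a : ℕ) (i : Fin d → ℤ) : Fin d → ℤ := fun k => (i k + a) / l

lemma card_shiftedBlock_ne_le {d : ℕ} (l : ℕ) (i j : Fin d → ℤ) :
    (((Finset.range l).filter fun a : ℕ => shiftedBlock l a j ≠ shiftedBlock l a i).card : ℤ) ≤
      l1dist i j := by
  have cover : ((Finset.range l).filter fun a : ℕ => shiftedBlock l a j ≠ shiftedBlock l a i) ⊆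
      Finset.univ.biUnion fun k => (Finset.range l).filter fun a : ℕ =>
        (i k + a) / (l : ℤ) ≠ (j k + a) / l := fun a ha => by
    obtain ⟨hal, hne⟩ := Finset.mem_filter.1 ha
    obtain ⟨k, hk⟩ := Function.ne_iff.1 hne
    exact Finset.mem_biUnion.2 ⟨k, Finset.mem_univ k, Finset.mem_filter.2 ⟨hal, hk.symm⟩⟩
  calc _ ≤ ((∑ k, ((Finset.range l).filter fun a : ℕ =>
          (i k + a) / (l : ℤ) ≠ (j k + a) / l).card : ℕ) : ℤ) :=
        Nat.cast_le.2 ((Finset.card_le_card cover).trans Finset.card_biUnion_le)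
    _ ≤ l1dist i j := by
        rw [Nat.cast_sum]
        exact Finset.sum_le_sum fun k _ => card_shift_ediv_ne_le l (i k) (j k)

lemma exists_shiftedBlock_sum_le {d : ℕ} {Λ : Finset (Fin d → ℤ)} {l : ℕ} (hl : 0 < l)
    {D : Λ → Λ → ℝ} (hD : ∀ i j, 0 ≤ D i j) :
    ∃ a, ∑ i, ∑ j with shiftedBlock l a j.1 ≠ shiftedBlock l a i.1, D i j ≤
      (∑ i, ∑ j, (l1dist i.1 j.1 : ℝ) * D i j) / l := by
  have average : ∑ a ∈ Finset.range l,
      ∑ i, ∑ j with shiftedBlock l a j.1 ≠ shiftedBlock l a i.1, D i j ≤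
        ∑ _a ∈ Finset.range l, (∑ i, ∑ j, (l1dist i.1 j.1 : ℝ) * D i j) / l := by
    rw [Finset.sum_const, Finset.card_range, nsmul_eq_mul, mul_div_cancel₀ _ (by positivity)]
    simp only [Finset.sum_filter]
    rw [Finset.sum_comm]
    refine Finset.sum_le_sum fun i _ => ?_
    rw [Finset.sum_comm]
    refine Finset.sum_le_sum fun j _ => ?_
    rw [← Finset.sum_filter, Finset.sum_const, nsmul_eq_mul]
    exact mul_le_mul_of_nonneg_right (mod_cast card_shiftedBlock_ne_le l i.1 j.1) (hD i j)
  obtain ⟨a, -, ha⟩ := Finset.exists_le_of_sum_le (Finset.nonempty_range_iff.2 hl.ne') average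
  exact ⟨a, ha⟩

lemma card_shiftedBlock_fiber_le {d : ℕ} (Λ : Finset (Fin d → ℤ)) {l : ℕ} (hl : 0 < l) (a : ℕ)
    (β : Fin d → ℤ) :
    (Finset.univ.filter fun i : Λ => shiftedBlock l a i.1 = β).card ≤ l ^ d := by
  let cube : Finset (Fin d → ℤ) :=
    Fintype.piFinset fun k => Finset.Ico (l * β k - a) (l * β k - a + l)
  have card_cube : cube.card = l ^ d := by simp [cube, Fintype.card_piFinset]
  rw [← card_cube]
  refine Finset.card_le_card_of_injOn (fun i => i.1) (fun i hi => ?_)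
    Subtype.val_injective.injOn
  refine Fintype.mem_piFinset.2 fun k => Finset.mem_Ico.2 ?_
  have hk : (i.1 k + a) / (l : ℤ) = β k := congrFun (Finset.mem_filter.1 hi).2 k
  have hdiv := Int.mul_ediv_add_emod (i.1 k + a) l
  have hmod := Int.emod_nonneg (i.1 k + a) (b := l) (by positivity)
  have hmod_lt := Int.emod_lt_of_pos (i.1 k + a) (b := l) (by positivity)
  rw [hk] at hdiv
  constructor <;> linarith

lemma summable_prod_pi {κ α : Type*} [Fintype κ] {f : α → ℝ} (hf0 : ∀ x, 0 ≤ f x)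
    (hf : Summable f) : Summable fun x : κ → α => ∏ k, f (x k) := by
  classical
  refine summable_of_sum_le (c := (∑' z, f z) ^ Fintype.card κ)
    (fun x => Finset.prod_nonneg fun k _ => hf0 _) fun u => ?_
  calc ∑ x ∈ u, ∏ k, f (x k) ≤
        ∑ x ∈ Fintype.piFinset fun k => u.image (· k), ∏ k, f (x k) :=
        Finset.sum_le_sum_of_subset_of_nonneg
          (fun x hx => Fintype.mem_piFinset.2 fun k => Finset.mem_image_of_mem (· k) hx)
          fun x _ _ => Finset.prod_nonneg fun k _ => hf0 _
    _ = ∏ k, ∑ z ∈ u.image (· k), f z := (Finset.prod_univ_sum _ _).symm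
    _ ≤ ∏ _ : κ, ∑' z, f z := Finset.prod_le_prod (fun k _ => Finset.sum_nonneg fun z _ => hf0 z)
        fun k _ => hf.sum_le_tsum _ fun z _ => hf0 z
    _ = (∑' z, f z) ^ Fintype.card κ := by simp

lemma summable_exp_neg_mul_abs_int {c : ℝ} (hc : 0 < c) :
    Summable fun z : ℤ => Real.exp (-c * |(z : ℝ)|) := by
  have hnat : Summable fun n : ℕ => Real.exp (-c * n) := by
    simpa only [mul_comm] using Real.summable_exp_nat_mul_iff.2 (neg_lt_zero.2 hc)
  exact .of_nat_of_neg (by simpa using hnat) (by simpa using hnat)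

lemma summable_exp_neg_mul_l1dist (d : ℕ) {c : ℝ} (hc : 0 < c) :
    Summable fun x : Fin d → ℤ => Real.exp (-c * l1dist x 0) := by
  refine (summable_prod_pi (κ := Fin d) (fun z : ℤ => (Real.exp_pos _).le)
    (summable_exp_neg_mul_abs_int hc)).congr fun x => ?_
  rw [← Real.exp_sum, ← Finset.mul_sum, l1dist]
  simp

lemma one_add_mul_exp_neg_le {c x : ℝ} (hc : 0 < c) (hx : 0 ≤ x) :
    (1 + x) * Real.exp (-c * x) ≤ (1 + 2 / c) * Real.exp (-(c / 2) * x) := by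
  have linear_le : 1 + x ≤ (1 + 2 / c) * Real.exp (c / 2 * x) := by
    calc 1 + x ≤ (1 + 2 / c) * (c / 2 * x + 1) := by
          have : (1 + 2 / c) * (c / 2 * x + 1) = 1 + x + c / 2 * x + 2 / c := by
            field_simp
            ring
          rw [this]
          have := div_pos two_pos hc
          nlinarith
      _ ≤ _ := mul_le_mul_of_nonneg_left (Real.add_one_le_exp _) (by positivity)
  calc (1 + x) * Real.exp (-c * x) ≤
        (1 + 2 / c) * Real.exp (c / 2 * x) * Real.exp (-c * x) :=
        mul_le_mul_of_nonneg_right linear_le (Real.exp_pos _).le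
    _ = (1 + 2 / c) * Real.exp (-(c / 2) * x) := by
        rw [mul_assoc, ← Real.exp_add]; ring_nf

/-- The sum over `x ∈ ℤ^d` of `(1 + ‖x‖₁) exp(-c ‖x‖₁)`, which bounds the total covariance of a
site with all others, both plain and weighted by distance. -/
def expDecaySum (d : ℕ) (c : ℝ) : ℝ :=
  ∑' x : Fin d → ℤ, (1 + (l1dist x 0 : ℝ)) * Real.exp (-c * l1dist x 0)

lemma sum_exp_neg_l1dist_le_expDecaySum {d : ℕ} {c : ℝ} (hc : 0 < c) (Λ : Finset (Fin d → ℤ))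
    (i : Fin d → ℤ) :
    ∑ j ∈ Λ, (1 + (l1dist i j : ℝ)) * Real.exp (-c * l1dist i j) ≤ expDecaySum d c := by
  let w (x : Fin d → ℤ) : ℝ := (1 + (l1dist x 0 : ℝ)) * Real.exp (-c * l1dist x 0)
  have dist_nonneg (x : Fin d → ℤ) : (0 : ℝ) ≤ l1dist x 0 := Int.cast_nonneg (l1dist_nonneg x 0)
  have w_nonneg (x : Fin d → ℤ) : 0 ≤ w x :=
    mul_nonneg (by linarith [dist_nonneg x]) (Real.exp_pos _).le
  have w_summable : Summable w :=
    .of_nonneg_of_le w_nonneg (fun x => one_add_mul_exp_neg_le hc (dist_nonneg x))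
      ((summable_exp_neg_mul_l1dist d (half_pos hc)).mul_left _)
  have translate (j : Fin d → ℤ) : l1dist i j = l1dist (i - j) 0 := by simp [l1dist]
  calc ∑ j ∈ Λ, (1 + (l1dist i j : ℝ)) * Real.exp (-c * l1dist i j) = ∑ j ∈ Λ, w (i - j) := by
        simp only [translate, w]
    _ ≤ ∑' j, w (i - j) :=
        ((Equiv.subLeft i).summable_iff.2 w_summable).sum_le_tsum _ fun j _ => w_nonneg _
    _ = expDecaySum d c := (Equiv.subLeft i).tsum_eq w

section ProductMeasure

variable {Ω Ω' : Type*} [MeasurableSpace Ω] [MeasurableSpace Ω'] {μ : Measure Ω} {ν : Measure Ω'}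

lemma covariance_of_integral_eq_zero {f g : Ω → ℝ} (hf : ∫ s, f s ∂μ = 0) (hg : ∫ s, g s ∂μ = 0) :
    cov[f, g; μ] = ∫ s, f s * g s ∂μ := by
  simp only [covariance, hf, hg, sub_zero]

lemma covariance_comp_measurePreserving {T : Ω → Ω'} (hT : MeasurePreserving T μ ν) {f g : Ω' → ℝ}
    (hf : AEStronglyMeasurable f ν) (hg : AEStronglyMeasurable g ν) :
    cov[fun s => f (T s), fun s => g (T s); μ] = cov[f, g; ν] := by
  rw [← hT.map_eq] at hf hg ⊢
  exact (covariance_map_fun hf hg hT.aemeasurable).symm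

lemma covariance_prod_mul [SFinite μ] [SFinite ν] {f f' : Ω → ℝ} {g g' : Ω' → ℝ}
    (hf : ∫ s, f s ∂μ = 0) (hf' : ∫ s, f' s ∂μ = 0) (hg : ∫ s, g s ∂ν = 0)
    (hg' : ∫ s, g' s ∂ν = 0) :
    cov[fun p => f p.1 * g p.2, fun p => f' p.1 * g' p.2; μ.prod ν] =
      cov[f, f'; μ] * cov[g, g'; ν] := by
  rw [covariance_of_integral_eq_zero (by rw [integral_prod_mul, hf, zero_mul])
      (by rw [integral_prod_mul, hf', zero_mul]), covariance_of_integral_eq_zero hf hf',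
    covariance_of_integral_eq_zero hg hg', ← integral_prod_mul]
  exact integral_congr_ae (.of_forall fun p => mul_mul_mul_comm _ _ _ _)

lemma covariance_prod_add [IsProbabilityMeasure μ] [IsProbabilityMeasure ν] {f f' : Ω → ℝ}
    {g g' : Ω' → ℝ} (hf : MemLp f 2 μ) (hf' : MemLp f' 2 μ) (hg : MemLp g 2 ν)
    (hg' : MemLp g' 2 ν) :
    cov[fun p => f p.1 + g p.2, fun p => f' p.1 + g' p.2; μ.prod ν] =
      cov[f, f'; μ] + cov[g, g'; ν] := by
  have hfst {h : Ω → ℝ} (hh : MemLp h 2 μ) : MemLp (fun p : Ω × Ω' => h p.1) 2 (μ.prod ν) :=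
    hh.comp_fst ν
  have hsnd {h : Ω' → ℝ} (hh : MemLp h 2 ν) : MemLp (fun p : Ω × Ω' => h p.2) 2 (μ.prod ν) :=
    hh.comp_snd μ
  have cov_fst : cov[fun p => f p.1, fun p => f' p.1; μ.prod ν] = cov[f, f'; μ] :=
    covariance_comp_measurePreserving measurePreserving_fst hf.1 hf'.1
  have cov_snd : cov[fun p => g p.2, fun p => g' p.2; μ.prod ν] = cov[g, g'; ν] :=
    covariance_comp_measurePreserving measurePreserving_snd hg.1 hg'.1
  change cov[(fun p : Ω × Ω' => f p.1) + fun p => g p.2, (fun p => f' p.1) + fun p => g' p.2;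
    μ.prod ν] = _
  rw [covariance_add_left (hfst hf) (hsnd hg) ((hfst hf').add (hsnd hg')),
    covariance_add_right (hfst hf) (hfst hf') (hsnd hg'),
    covariance_add_right (hsnd hg) (hfst hf') (hsnd hg'), covariance_fst_snd_prod hf hg',
    covariance_comm (fun p : Ω × Ω' => g p.2), covariance_fst_snd_prod hf' hg, cov_fst, cov_snd]
  ring

end ProductMeasure

/-- The spin at the site `i`, as a function of a boolean configuration. -/
def spin {ι : Type*} (i : ι) (s : ι → Bool) : ℝ := pmVec s i

section Spin

variable {ι : Type*}

lemma spin_mul_self (i : ι) (s : ι → Bool) : spin i s * spin i s = 1 := by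
  cases h : s i <;> simp [spin, pmVec, h]

lemma abs_spin (i : ι) (s : ι → Bool) : |spin i s| = 1 := by
  cases h : s i <;> simp [spin, pmVec, h]

lemma monotone_spin (i : ι) : Monotone (spin i) := fun s s' h => by
  have hi : s i = true → s' i = true := Bool.le_iff_imp.1 (h i)
  cases hs : s i <;> cases hs' : s' i <;> simp_all [spin, pmVec]

end Spin

/-- The product of the two spins at the site `i`, for a pair of configurations. -/
def spinProd {ι : Type*} (i : ι) (p : (ι → Bool) × (ι → Bool)) : ℝ := spin i p.1 * spin i p.2

/-- The sum of the two spins at the site `i`, for a pair of configurations; it dominates the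
increments of `spinProd i`. -/
def spinAdd {ι : Type*} (i : ι) (p : (ι → Bool) × (ι → Bool)) : ℝ := spin i p.1 + spin i p.2

/-- The average over the sites `i` of the sum over `j ≠ i` of the products of the covariances of
the spins at `i` and `j` under `μ` and `ν`; its limit is the paper's `κ`. -/
def covOverlap {ι : Type*} [Fintype ι] [DecidableEq ι] (μ ν : Measure (ι → Bool)) : ℝ :=
  (Fintype.card ι : ℝ)⁻¹ *
    ∑ i, ∑ j, if i ≠ j then cov[spin i, spin j; μ] * cov[spin i, spin j; ν] else 0

lemma IsLogSupermodular.covariance_spin_nonneg {ι : Type*} [Finite ι] {μ : Measure (ι → Bool)}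
    [IsProbabilityMeasure μ] (hμ : IsLogSupermodular μ) (i j : ι) :
    0 ≤ cov[spin i, spin j; μ] :=
  hμ.positivelyAssociated _ _ (monotone_spin i) (monotone_spin j) .of_discrete .of_discrete

section SpinPair

variable {ι : Type*}

lemma incrementBound_spinProd (i : ι) : IncrementBound (spinProd i) (spinAdd i) :=
  (IncrementBound.of_monotone (monotone_spin i)).prod_mul
    (IncrementBound.of_monotone (monotone_spin i)) (fun s => (abs_spin i s).le)
    fun s => (abs_spin i s).le

lemma abs_spinProd (i : ι) (p : (ι → Bool) × (ι → Bool)) : |spinProd i p| = 1 := by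
  rw [spinProd, abs_mul, abs_spin, abs_spin, one_mul]

lemma integral_spinProd {μ ν : Measure (ι → Bool)} [SFinite μ] [SFinite ν]
    (hμ : ∀ i, ∫ s, spin i s ∂μ = 0) (i : ι) : ∫ p, spinProd i p ∂μ.prod ν = 0 := by
  simp only [spinProd]
  rw [integral_prod_mul, hμ, zero_mul]

lemma le_covOverlap [Fintype ι] [Nonempty ι] [DecidableEq ι]
    {μ ν : Measure (ι → Bool)} {a : ℝ}
    (hμ : ∀ i j, 0 ≤ cov[spin i, spin j; μ]) (hν : ∀ i j, 0 ≤ cov[spin i, spin j; ν])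
    (ha : ∀ i, ∃ j, i ≠ j ∧ a ≤ cov[spin i, spin j; μ] * cov[spin i, spin j; ν]) :
    a ≤ covOverlap μ ν := by
  rw [covOverlap, ← div_eq_inv_mul, le_div_iff₀ (by positivity), mul_comm, ← nsmul_eq_mul,
    ← Finset.card_univ]
  refine Finset.card_nsmul_le_sum _ _ _ fun i _ => ?_
  obtain ⟨j, hij, haj⟩ := ha i
  calc a ≤ if i ≠ j then cov[spin i, spin j; μ] * cov[spin i, spin j; ν] else 0 := by
        rwa [if_pos hij]
    _ ≤ _ := Finset.single_le_sum
        (f := fun j => if i ≠ j then cov[spin i, spin j; μ] * cov[spin i, spin j; ν] else 0)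
        (fun k _ => ite_nonneg (mul_nonneg (hμ i k) (hν i k)) le_rfl) (Finset.mem_univ j)

variable {μ ν : Measure (ι → Bool)} [IsProbabilityMeasure μ] [IsProbabilityMeasure ν]

lemma covariance_spin_self (hμ : ∀ i, ∫ s, spin i s ∂μ = 0) (i : ι) :
    cov[spin i, spin i; μ] = 1 := by
  rw [covariance_of_integral_eq_zero (hμ i) (hμ i)]
  simp only [spin_mul_self, integral_const, probReal_univ, smul_eq_mul, mul_one]

lemma covariance_spinProd (hμ : ∀ i, ∫ s, spin i s ∂μ = 0) (hν : ∀ i, ∫ s, spin i s ∂ν = 0)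
    (i j : ι) : cov[spinProd i, spinProd j; μ.prod ν] =
      cov[spin i, spin j; μ] * cov[spin i, spin j; ν] :=
  covariance_prod_mul (hμ i) (hμ j) (hν i) (hν j)

lemma covariance_spinAdd [Finite ι] (i j : ι) : cov[spinAdd i, spinAdd j; μ.prod ν] =
    cov[spin i, spin j; μ] + cov[spin i, spin j; ν] :=
  covariance_prod_add .of_discrete .of_discrete .of_discrete .of_discrete

lemma variance_sum_spinProd [Fintype ι] [Nonempty ι] [DecidableEq ι]
    (hμ : ∀ i, ∫ s, spin i s ∂μ = 0) (hν : ∀ i, ∫ s, spin i s ∂ν = 0) :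
    Var[fun p => ∑ i, spinProd i p; μ.prod ν] = Fintype.card ι * (1 + covOverlap μ ν) := by
  have split (i j : ι) : cov[spinProd i, spinProd j; μ.prod ν] = (if i = j then 1 else 0) +
      if i ≠ j then cov[spin i, spin j; μ] * cov[spin i, spin j; ν] else 0 := by
    rcases eq_or_ne i j with rfl | hij
    · simp [covariance_spinProd hμ hν, covariance_spin_self hμ, covariance_spin_self hν]
    · simp [hij, covariance_spinProd hμ hν]
  rw [variance_fun_sum fun i => .of_discrete]
  simp only [split, Finset.sum_add_distrib, Finset.sum_ite_eq, Finset.mem_univ, if_true,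
    Finset.sum_const, Finset.card_univ, nsmul_eq_mul, mul_one]
  rw [covOverlap, mul_add, mul_one, mul_inv_cancel_left₀ (by positivity)]

end SpinPair

/-- A symmetric ferromagnetic random field of spins on `Λ ⊆ ℤ^d` whose covariances decay at the
exponential rate `c`: what the central limit theorem needs of the Ising measures. -/
structure IsDecayingSpinField {d : ℕ} {Λ : Finset (Fin d → ℤ)} (c : ℝ) (μ : Measure (Λ → Bool)) :
    Prop where
  isProbabilityMeasure : IsProbabilityMeasure μ
  isLogSupermodular : IsLogSupermodular μ
  integral_spin : ∀ i, ∫ s, spin i s ∂μ = 0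
  covariance_spin_le : ∀ i j, i ≠ j →
    cov[spin i, spin j; μ] ≤ Real.exp (-c * (l1dist i.1 j.1 : ℝ))

namespace IsDecayingSpinField

variable {d : ℕ} {Λ : Finset (Fin d → ℤ)} {c : ℝ} {μ ν : Measure (Λ → Bool)}

lemma covariance_nonneg (hμ : IsDecayingSpinField c μ) (i j : Λ) : 0 ≤ cov[spin i, spin j; μ] :=
  have := hμ.isProbabilityMeasure
  hμ.isLogSupermodular.covariance_spin_nonneg i j

lemma covariance_spinAdd_nonneg (hμ : IsDecayingSpinField c μ) (hν : IsDecayingSpinField c ν)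
    (i j : Λ) : 0 ≤ cov[spinAdd i, spinAdd j; μ.prod ν] := by
  have := hμ.isProbabilityMeasure
  have := hν.isProbabilityMeasure
  rw [covariance_spinAdd]
  exact add_nonneg (hμ.covariance_nonneg i j) (hν.covariance_nonneg i j)

lemma sum_one_add_l1dist_mul_covariance_le (hμ : IsDecayingSpinField c μ) (hc : 0 < c) :
    ∑ i, ∑ j, (1 + (l1dist i.1 j.1 : ℝ)) * cov[spin i, spin j; μ] ≤ Λ.card * expDecaySum d c := by
  have := hμ.isProbabilityMeasure
  have covariance_le (i j : Λ) :
      cov[spin i, spin j; μ] ≤ Real.exp (-c * (l1dist i.1 j.1 : ℝ)) := by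
    rcases eq_or_ne i j with rfl | hij
    · simp [covariance_spin_self hμ.integral_spin, l1dist_self]
    · exact hμ.covariance_spin_le i j hij
  have row_le (i : Λ) :
      ∑ j, (1 + (l1dist i.1 j.1 : ℝ)) * cov[spin i, spin j; μ] ≤ expDecaySum d c := by
    calc _ ≤ ∑ j : Λ, (1 + (l1dist i.1 j.1 : ℝ)) * Real.exp (-c * l1dist i.1 j.1) :=
          Finset.sum_le_sum fun j _ => mul_le_mul_of_nonneg_left (covariance_le i j)
            (by have : (0 : ℝ) ≤ l1dist i.1 j.1 := Int.cast_nonneg (l1dist_nonneg _ _)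
                linarith)
      _ ≤ expDecaySum d c := by
          rw [Finset.sum_coe_sort Λ fun j =>
            (1 + (l1dist i.1 j : ℝ)) * Real.exp (-c * l1dist i.1 j)]
          exact sum_exp_neg_l1dist_le_expDecaySum hc Λ i.1
  simpa using Finset.sum_le_sum fun i (_ : i ∈ Finset.univ) => row_le i

lemma sum_one_add_l1dist_mul_covariance_spinAdd_le (hμ : IsDecayingSpinField c μ)
    (hν : IsDecayingSpinField c ν) (hc : 0 < c) :
    ∑ i, ∑ j, (1 + (l1dist i.1 j.1 : ℝ)) * cov[spinAdd i, spinAdd j; μ.prod ν] ≤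
      2 * (Λ.card * expDecaySum d c) := by
  have := hμ.isProbabilityMeasure
  have := hν.isProbabilityMeasure
  simp only [covariance_spinAdd, mul_add, Finset.sum_add_distrib]
  have hμ_le := hμ.sum_one_add_l1dist_mul_covariance_le hc
  have hν_le := hν.sum_one_add_l1dist_mul_covariance_le hc
  linarith

lemma norm_integral_exp_sum_spinProd_sub_le (hμ : IsDecayingSpinField c μ)
    (hν : IsDecayingSpinField c ν) (hc : 0 < c) (a : ℝ) {l : ℕ} (hl : 0 < l)
    (hal : |a| * (l : ℝ) ^ d ≤ 1) :
    ‖∫ p, Complex.exp ((a * ∑ i, spinProd i p : ℝ) * Complex.I) ∂μ.prod ν -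
        (Real.exp (-(a ^ 2 * Var[fun p => ∑ i, spinProd i p; μ.prod ν] / 2)) : ℂ)‖ ≤
      (10 / l + 4 * (|a| * (l : ℝ) ^ d)) * (a ^ 2 * Λ.card * expDecaySum d c) := by
  have := hμ.isProbabilityMeasure
  have := hν.isProbabilityMeasure
  let D (i j : Λ) : ℝ := cov[spinAdd i, spinAdd j; μ.prod ν]
  have D_nonneg (i j : Λ) : 0 ≤ D i j := hμ.covariance_spinAdd_nonneg hν i j
  have cov_scaled (i j : Λ) :
      cov[fun p => |a| * spinAdd i p, fun p => |a| * spinAdd j p; μ.prod ν] = a ^ 2 * D i j := by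
    rw [covariance_const_mul_left, covariance_const_mul_right, ← mul_assoc, abs_mul_abs_self, sq]
  obtain ⟨b, hb⟩ := exists_shiftedBlock_sum_le hl D_nonneg
  have sum_dist_nonneg : 0 ≤ ∑ i : Λ, ∑ j : Λ, (l1dist i.1 j.1 : ℝ) * D i j :=
    Finset.sum_nonneg fun i _ => Finset.sum_nonneg fun j _ =>
      mul_nonneg (Int.cast_nonneg (l1dist_nonneg _ _)) (D_nonneg i j)
  have sum_nonneg : 0 ≤ ∑ i, ∑ j, D i j :=
    Finset.sum_nonneg fun i _ => Finset.sum_nonneg fun j _ => D_nonneg i j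
  have total := hμ.sum_one_add_l1dist_mul_covariance_spinAdd_le hν hc
  simp only [add_mul, one_mul, Finset.sum_add_distrib] at total
  have positivelyAssociated : PositivelyAssociated (μ.prod ν) :=
    (hμ.isLogSupermodular.prod hν.isLogSupermodular).positivelyAssociated
  have blocks := positivelyAssociated.norm_integral_exp_sum_sub_le_of_blocks
    (fun i => (incrementBound_spinProd i).const_mul a)
    (fun i => Measurable.of_discrete.aemeasurable) (fun i => .of_discrete)
    (fun i => by rw [integral_const_mul, integral_spinProd hμ.integral_spin, mul_zero])
    (abs_nonneg a) (fun i p => by rw [abs_mul, abs_spinProd, mul_one])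
    (fun i : Λ => shiftedBlock l b i.1) (card_shiftedBlock_fiber_le Λ hl b) (by exact_mod_cast hal)
  simp only [cov_scaled, ← Finset.mul_sum, variance_const_mul] at blocks
  refine blocks.trans ?_
  have boundary_le : ∑ i, ∑ j with shiftedBlock l b j.1 ≠ shiftedBlock l b i.1, D i j ≤
      2 * (Λ.card * expDecaySum d c) / l :=
    hb.trans (by gcongr; linarith)
  have total_le : ∑ i, ∑ j, D i j ≤ 2 * (Λ.card * expDecaySum d c) := by linarith
  calc _ ≤ 5 * (a ^ 2 * (2 * (Λ.card * expDecaySum d c) / l)) +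
        2 * (|a| * (l : ℝ) ^ d) * (a ^ 2 * (2 * (Λ.card * expDecaySum d c))) := by
        push_cast
        gcongr
    _ = _ := by ring

end IsDecayingSpinField

lemma tendstoInDistribution_of_tendsto_charFun {μ : ℕ → Measure ℝ} [∀ n, IsProbabilityMeasure (μ n)]
    {ν : Measure ℝ} [IsProbabilityMeasure ν]
    (h : ∀ t, Tendsto (fun n => charFun (μ n) t) atTop (𝓝 (charFun ν t))) :
    _root_.TendstoInDistribution μ ν :=
  ProbabilityMeasure.tendsto_iff_forall_integral_tendsto.1 <|
    (ProbabilityMeasure.tendsto_iff_tendsto_charFun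
      (μ := fun n => (⟨μ n, inferInstance⟩ : ProbabilityMeasure ℝ))
      (μ₀ := (⟨ν, inferInstance⟩ : ProbabilityMeasure ℝ))).2 h

lemma norm_integral_exp_sub_integral_exp_le {Ω : Type*} [MeasurableSpace Ω] {μ : Measure Ω}
    [IsProbabilityMeasure μ] {S Z : Ω → ℝ} (hS : AEMeasurable S μ) (hZ : AEMeasurable Z μ)
    {D : Ω → ℝ} (hD : Integrable D μ) (hSZ : ∀ s, |S s - Z s| ≤ D s) :
    ‖∫ s, Complex.exp (S s * Complex.I) ∂μ - ∫ s, Complex.exp (Z s * Complex.I) ∂μ‖ ≤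
      ∫ s, D s ∂μ := by
  have integrable_exp {Y : Ω → ℝ} (hY : AEMeasurable Y μ) :
      Integrable (fun s => Complex.exp (Y s * Complex.I)) μ :=
    .of_bound (by fun_prop) 1 (.of_forall fun s => (Complex.norm_exp_ofReal_mul_I _).le)
  rw [← integral_sub (integrable_exp hS) (integrable_exp hZ)]
  exact norm_integral_le_of_norm_le hD
    (.of_forall fun s => (norm_exp_ofReal_mul_I_sub_le _ _).trans (hSZ s))

lemma tendsto_zero_of_forall_block_bound {α E : Type*} [NormedAddCommGroup E] {F : Filter α}
    {e : α → E} {r : α → ℝ} {K : ℝ} {d : ℕ} (hr : Tendsto r F (𝓝 0))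
    (h : ∀ᶠ n in F, ∀ l : ℕ, 0 < l → r n * (l : ℝ) ^ d ≤ 1 →
      ‖e n‖ ≤ (10 / l + 4 * (r n * (l : ℝ) ^ d)) * K) :
    Tendsto e F (𝓝 0) := by
  rw [NormedAddGroup.tendsto_nhds_zero]
  intro ε hε
  have tendsto_l : Tendsto (fun l : ℕ => 10 / (l : ℝ) * K) atTop (𝓝 0) := by
    simpa using (tendsto_const_div_atTop_nhds_zero_nat (10 : ℝ)).mul_const K
  obtain ⟨l, hlε, hl⟩ := ((tendsto_l.eventually (gt_mem_nhds (half_pos hε))).and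
    (eventually_gt_atTop 0)).exists
  have tendsto_r : Tendsto (fun n => r n * (l : ℝ) ^ d) F (𝓝 0) := by
    simpa using hr.mul_const ((l : ℝ) ^ d)
  have tendsto_rK : Tendsto (fun n => 4 * (r n * (l : ℝ) ^ d) * K) F (𝓝 0) := by
    simpa using (tendsto_r.const_mul 4).mul_const K
  filter_upwards [h, tendsto_r.eventually (gt_mem_nhds one_pos),
    tendsto_rK.eventually (gt_mem_nhds (half_pos hε))] with n hn hr1 hrε
  have := hn l hl hr1.le
  linarith

namespace IsDecayingSpinField

lemma integral_sq_sampleMean_le {d : ℕ} {Λ : Finset (Fin d → ℤ)} {c : ℝ} {μ : Measure (Λ → Bool)}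
    (hμ : IsDecayingSpinField c μ) (hc : 0 < c) :
    ∫ s, sampleMean (pmVec s) ^ 2 ∂μ ≤ expDecaySum d c / Λ.card := by
  have := hμ.isProbabilityMeasure
  have integral_sq_sum : ∫ s, (∑ i, spin i s) ^ 2 ∂μ = ∑ i, ∑ j, cov[spin i, spin j; μ] := by
    rw [← variance_fun_sum fun i => .of_discrete, variance_of_integral_eq_zero
      Measurable.of_discrete.aemeasurable]
    rw [integral_finsetSum _ fun i _ => .of_finite]
    exact Finset.sum_eq_zero fun i _ => hμ.integral_spin i
  have covariance_le : ∑ i, ∑ j, cov[spin i, spin j; μ] ≤ Λ.card * expDecaySum d c := by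
    refine le_trans ?_ (hμ.sum_one_add_l1dist_mul_covariance_le hc)
    refine Finset.sum_le_sum fun i _ => Finset.sum_le_sum fun j _ =>
      le_mul_of_one_le_left (hμ.covariance_nonneg i j) ?_
    exact le_add_of_nonneg_right (Int.cast_nonneg (l1dist_nonneg _ _))
  calc ∫ s, sampleMean (pmVec s) ^ 2 ∂μ = (∫ s, (∑ i, spin i s) ^ 2 ∂μ) / (Λ.card : ℝ) ^ 2 := by
        rw [← integral_div]
        simp only [sampleMean, div_pow, Fintype.card_coe, spin]
    _ ≤ Λ.card * expDecaySum d c / (Λ.card : ℝ) ^ 2 := by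
        rw [integral_sq_sum]
        gcongr
    _ = expDecaySum d c / Λ.card := by
        rcases eq_or_ne (Λ.card : ℝ) 0 with h | h
        · simp [h]
        · field_simp

lemma covOverlap_nonneg {d : ℕ} {Λ : Finset (Fin d → ℤ)} {c c' : ℝ} {μ ν : Measure (Λ → Bool)}
    (hμ : IsDecayingSpinField c μ) (hν : IsDecayingSpinField c' ν) : 0 ≤ covOverlap μ ν :=
  mul_nonneg (by positivity) <| Finset.sum_nonneg fun i _ => Finset.sum_nonneg fun j _ =>
    ite_nonneg (mul_nonneg (hμ.covariance_nonneg i j) (hν.covariance_nonneg i j)) le_rfl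

variable {d : ℕ} {Λ : ℕ → Finset (Fin d → ℤ)} {c κ : ℝ} {μ ν : ∀ n, Measure (Λ n → Bool)}

lemma tendsto_integral_exp_sum_spinProd (hμ : ∀ n, IsDecayingSpinField c (μ n))
    (hν : ∀ n, IsDecayingSpinField c (ν n)) (hc : 0 < c)
    (hΛ : Tendsto (fun n => ((Λ n).card : ℝ)) atTop atTop)
    (hκ : Tendsto (fun n => covOverlap (μ n) (ν n)) atTop (𝓝 κ)) (t : ℝ) :
    Tendsto (fun n => ∫ p, Complex.exp
        ((t * ((√(Λ n).card)⁻¹ * ∑ i, spinProd i p) : ℝ) * Complex.I) ∂(μ n).prod (ν n))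
      atTop (𝓝 (Real.exp (-(t ^ 2 * (1 + κ) / 2)) : ℂ)) := by
  let a (n : ℕ) : ℝ := t * (√(Λ n).card)⁻¹
  have tendsto_a : Tendsto (fun n => |a n|) atTop (𝓝 0) := by
    simpa [a, abs_mul] using
      ((tendsto_inv_atTop_zero.comp (Real.tendsto_sqrt_atTop.comp hΛ)).const_mul t).abs
  have a_sq : ∀ᶠ n in atTop, a n ^ 2 * (Λ n).card = t ^ 2 := by
    filter_upwards [hΛ.eventually_gt_atTop 0] with n hn
    rw [mul_pow, inv_pow, Real.sq_sqrt hn.le, mul_assoc, inv_mul_cancel₀ hn.ne', mul_one]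
  have tendsto_sub := tendsto_zero_of_forall_block_bound (d := d)
    (K := t ^ 2 * expDecaySum d c) tendsto_a (e := fun n =>
      ∫ p, Complex.exp ((a n * ∑ i, spinProd i p : ℝ) * Complex.I) ∂(μ n).prod (ν n) -
        (Real.exp (-(a n ^ 2 * Var[fun p => ∑ i, spinProd i p; (μ n).prod (ν n)] / 2)) : ℂ)) <| by
    filter_upwards [a_sq] with n hn l hl hal
    rw [← hn]
    exact (hμ n).norm_integral_exp_sum_spinProd_sub_le (hν n) hc (a n) hl hal
  have tendsto_gaussian : Tendsto (fun n =>
      (Real.exp (-(a n ^ 2 * Var[fun p => ∑ i, spinProd i p; (μ n).prod (ν n)] / 2)) : ℂ))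
      atTop (𝓝 (Real.exp (-(t ^ 2 * (1 + κ) / 2)) : ℂ)) := by
    refine (Complex.continuous_ofReal.tendsto _).comp ((Real.continuous_exp.tendsto _).comp ?_)
    refine (((hκ.const_add 1).const_mul (t ^ 2)).div_const 2).neg.congr' ?_
    filter_upwards [a_sq, hΛ.eventually_gt_atTop 0] with n hn hcard
    have := (hμ n).isProbabilityMeasure
    have := (hν n).isProbabilityMeasure
    have : Nonempty (Λ n) := (Finset.card_pos.1 (Nat.cast_pos.1 hcard)).to_subtype
    rw [variance_sum_spinProd (hμ n).integral_spin (hν n).integral_spin, Fintype.card_coe,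
      ← mul_assoc, hn]
  simpa only [sub_add_cancel, zero_add, a, mul_assoc] using tendsto_sub.add tendsto_gaussian

lemma tendsto_sqrt_card_mul_integral_sq_sampleMean (hμ : ∀ n, IsDecayingSpinField c (μ n))
    (hc : 0 < c) (hΛ : Tendsto (fun n => ((Λ n).card : ℝ)) atTop atTop) :
    Tendsto (fun n => √(Λ n).card * ∫ s, sampleMean (pmVec s) ^ 2 ∂μ n) atTop (𝓝 0) := by
  have tendsto_bound : Tendsto (fun n => expDecaySum d c / √(Λ n).card) atTop (𝓝 0) :=
    tendsto_const_nhds.div_atTop (Real.tendsto_sqrt_atTop.comp hΛ)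
  refine squeeze_zero (fun n => mul_nonneg (Real.sqrt_nonneg _)
    (integral_nonneg fun s => sq_nonneg _)) (fun n => ?_) tendsto_bound
  calc √(Λ n).card * ∫ s, sampleMean (pmVec s) ^ 2 ∂μ n
      ≤ √(Λ n).card * (expDecaySum d c / (Λ n).card) := by
        gcongr
        exact (hμ n).integral_sq_sampleMean_le hc
    _ = expDecaySum d c / √(Λ n).card := by
        rw [mul_div_left_comm, Real.sqrt_div_self', mul_one_div]

lemma tendsto_integral_exp_of_abs_sub_le (hμ : ∀ n, IsDecayingSpinField c (μ n))
    (hν : ∀ n, IsDecayingSpinField c (ν n)) (hc : 0 < c)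
    (hΛ : Tendsto (fun n => ((Λ n).card : ℝ)) atTop atTop)
    (hκ : Tendsto (fun n => covOverlap (μ n) (ν n)) atTop (𝓝 κ))
    {S : ∀ n, (Λ n → Bool) × (Λ n → Bool) → ℝ} {C : ℝ}
    (hS : ∀ n p, |S n p - (√(Λ n).card)⁻¹ * ∑ i, spinProd i p| ≤
      C * √(Λ n).card * (sampleMean (pmVec p.1) ^ 2 + sampleMean (pmVec p.2) ^ 2)) (t : ℝ) :
    Tendsto (fun n => ∫ p, Complex.exp ((t * S n p : ℝ) * Complex.I) ∂(μ n).prod (ν n))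
      atTop (𝓝 (Real.exp (-(t ^ 2 * (1 + κ) / 2)) : ℂ)) := by
  have hμP (n : ℕ) := (hμ n).isProbabilityMeasure
  have hνP (n : ℕ) := (hν n).isProbabilityMeasure
  let D n (p : (Λ n → Bool) × (Λ n → Bool)) : ℝ :=
    |t| * C * √(Λ n).card * (sampleMean (pmVec p.1) ^ 2 + sampleMean (pmVec p.2) ^ 2)
  have integral_D (n : ℕ) : ∫ p, D n p ∂(μ n).prod (ν n) =
      |t| * C * (√(Λ n).card * ∫ s, sampleMean (pmVec s) ^ 2 ∂μ n +
        √(Λ n).card * ∫ s, sampleMean (pmVec s) ^ 2 ∂ν n) := by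
    rw [integral_const_mul, integral_add .of_finite .of_finite,
      integral_fun_fst fun s : Λ n → Bool => sampleMean (pmVec s) ^ 2,
      integral_fun_snd fun s : Λ n → Bool => sampleMean (pmVec s) ^ 2]
    simp only [probReal_univ, one_smul]
    ring
  have tendsto_integral_D : Tendsto (fun n => ∫ p, D n p ∂(μ n).prod (ν n)) atTop (𝓝 0) := by
    simp only [integral_D]
    simpa using ((tendsto_sqrt_card_mul_integral_sq_sampleMean hμ hc hΛ).add
      (tendsto_sqrt_card_mul_integral_sq_sampleMean hν hc hΛ)).const_mul (|t| * C)
  refine (tendsto_integral_exp_sum_spinProd hμ hν hc hΛ hκ t).congr_dist <|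
    squeeze_zero (fun _ => dist_nonneg) (fun n => ?_) tendsto_integral_D
  rw [dist_comm, dist_eq_norm]
  refine norm_integral_exp_sub_integral_exp_le Measurable.of_discrete.aemeasurable
    Measurable.of_discrete.aemeasurable .of_finite fun p => ?_
  calc |t * S n p - t * ((√(Λ n).card)⁻¹ * ∑ i, spinProd i p)|
      = |t| * |S n p - (√(Λ n).card)⁻¹ * ∑ i, spinProd i p| := by rw [← mul_sub, abs_mul]
    _ ≤ D n p := by
        simp only [D, mul_assoc |t|]
        exact mul_le_mul_of_nonneg_left (hS n p) (abs_nonneg t)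

theorem tendstoInDistribution_of_abs_sub_le (hμ : ∀ n, IsDecayingSpinField c (μ n))
    (hν : ∀ n, IsDecayingSpinField c (ν n)) (hc : 0 < c)
    (hΛ : Tendsto (fun n => ((Λ n).card : ℝ)) atTop atTop)
    (hκ : Tendsto (fun n => covOverlap (μ n) (ν n)) atTop (𝓝 κ))
    {S : ∀ n, (Λ n → Bool) × (Λ n → Bool) → ℝ} {C : ℝ}
    (hS : ∀ n p, |S n p - (√(Λ n).card)⁻¹ * ∑ i, spinProd i p| ≤
      C * √(Λ n).card * (sampleMean (pmVec p.1) ^ 2 + sampleMean (pmVec p.2) ^ 2)) :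
    _root_.TendstoInDistribution (fun n => ((μ n).prod (ν n)).map (S n))
      (gaussianReal 0 (1 + κ).toNNReal) := by
  have hμP (n : ℕ) := (hμ n).isProbabilityMeasure
  have hνP (n : ℕ) := (hν n).isProbabilityMeasure
  have map_isProbabilityMeasure (n : ℕ) :
      IsProbabilityMeasure (((μ n).prod (ν n)).map (S n)) :=
    Measure.isProbabilityMeasure_map Measurable.of_discrete.aemeasurable
  have κ_nonneg : 0 ≤ κ := ge_of_tendsto' hκ fun n => (hμ n).covOverlap_nonneg (hν n)
  refine tendstoInDistribution_of_tendsto_charFun fun t => ?_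
  have charFun_gaussian : charFun (gaussianReal 0 (1 + κ).toNNReal) t =
      (Real.exp (-(t ^ 2 * (1 + κ) / 2)) : ℂ) := by
    rw [charFun_gaussianReal, Real.coe_toNNReal _ (by linarith)]
    push_cast
    ring_nf
  have charFun_map (n : ℕ) : charFun (((μ n).prod (ν n)).map (S n)) t =
      ∫ p, Complex.exp ((t * S n p : ℝ) * Complex.I) ∂(μ n).prod (ν n) := by
    rw [charFun_apply_real, integral_map Measurable.of_discrete.aemeasurable (by fun_prop)]
    simp only [Complex.ofReal_mul]
  simpa only [charFun_gaussian, charFun_map] using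
    tendsto_integral_exp_of_abs_sub_le hμ hν hc hΛ hκ hS t

end IsDecayingSpinField

section SampleStatistics

variable {ι : Type*} [Fintype ι]

lemma abs_sum_centered_mul_le (x y : ι → ℝ) :
    |∑ i, (x i - sampleMean x) * (y i - sampleMean y)| ≤
      √(∑ i, (x i - sampleMean x) ^ 2) * √(∑ i, (y i - sampleMean y) ^ 2) := by
  rw [← Real.sqrt_mul (Finset.sum_nonneg fun _ _ => sq_nonneg _)]
  exact Real.abs_le_sqrt (Finset.sum_mul_sq_le_sq_mul_sq _ _ _)

lemma abs_sampleCorr_le_one (x y : ι → ℝ) : |sampleCorr x y| ≤ 1 := by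
  rw [sampleCorr, abs_div, abs_of_nonneg (by positivity : 0 ≤ √_ * √_)]
  exact div_le_one_of_le₀ (abs_sum_centered_mul_le x y) (by positivity)

lemma sampleCov_eq_sampleCorr_mul (x y : ι → ℝ) :
    sampleCov x y = sampleCorr x y *
      (√(∑ i, (x i - sampleMean x) ^ 2) * √(∑ i, (y i - sampleMean y) ^ 2) / Fintype.card ι) := by
  have cauchy_schwarz := abs_sum_centered_mul_le x y
  rw [sampleCov, sampleCorr, ← mul_div_assoc]
  rcases eq_or_ne (√(∑ i, (x i - sampleMean x) ^ 2) * √(∑ i, (y i - sampleMean y) ^ 2)) 0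
    with h | h
  · rw [h, abs_nonpos_iff] at cauchy_schwarz
    rw [h, cauchy_schwarz, mul_zero]
  · rw [div_mul_cancel₀ _ h]

lemma sampleCov_eq_mean_mul_sub [Nonempty ι] (x y : ι → ℝ) :
    sampleCov x y = (∑ i, x i * y i) / Fintype.card ι - sampleMean x * sampleMean y := by
  have sum_eq (z : ι → ℝ) : ∑ i, z i = Fintype.card ι * sampleMean z :=
    (mul_div_cancel₀ _ (by positivity)).symm
  have expand : ∑ i, (x i - sampleMean x) * (y i - sampleMean y) =
      ∑ i, x i * y i - Fintype.card ι * (sampleMean x * sampleMean y) := by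
    simp only [sub_mul, mul_sub, Finset.sum_sub_distrib, ← Finset.mul_sum, ← Finset.sum_mul,
      sum_eq x, sum_eq y, Finset.sum_const, Finset.card_univ, nsmul_eq_mul]
    ring
  rw [sampleCov, expand, sub_div, mul_div_cancel_left₀ _ (by positivity)]

lemma sum_sub_sampleMean_sq [Nonempty ι] {x : ι → ℝ} (hx : ∀ i, x i * x i = 1) :
    ∑ i, (x i - sampleMean x) ^ 2 = Fintype.card ι * (1 - sampleMean x ^ 2) := by
  have hcov := sampleCov_eq_mean_mul_sub x x
  simp only [hx, Finset.sum_const, Finset.card_univ, nsmul_eq_mul, mul_one, sampleCov, ← sq] at hcov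
  rwa [div_self (by positivity), div_eq_iff (by positivity), mul_comm] at hcov

lemma sampleMean_sq_le_one [Nonempty ι] {x : ι → ℝ} (hx : ∀ i, x i * x i = 1) :
    sampleMean x ^ 2 ≤ 1 := by
  have sum_nonneg : 0 ≤ ∑ i, (x i - sampleMean x) ^ 2 := Finset.sum_nonneg fun _ _ => sq_nonneg _
  rw [sum_sub_sampleMean_sq hx] at sum_nonneg
  exact sub_nonneg.1 (nonneg_of_mul_nonneg_right sum_nonneg (by positivity))

lemma abs_sampleCorr_sub_sampleCov_le [Nonempty ι] {x y : ι → ℝ} (hx : ∀ i, x i * x i = 1)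
    (hy : ∀ i, y i * y i = 1) :
    |sampleCorr x y - sampleCov x y| ≤ sampleMean x ^ 2 + sampleMean y ^ 2 := by
  have hx1 := sub_nonneg.2 (sampleMean_sq_le_one hx)
  have hy1 := sub_nonneg.2 (sampleMean_sq_le_one hy)
  set u := (1 - sampleMean x ^ 2) * (1 - sampleMean y ^ 2) with hu
  have u_le : u ≤ 1 := mul_le_one₀ (by linarith [sq_nonneg (sampleMean x)]) hy1
    (by linarith [sq_nonneg (sampleMean y)])
  have normalization : √(∑ i, (x i - sampleMean x) ^ 2) * √(∑ i, (y i - sampleMean y) ^ 2) /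
      Fintype.card ι = √u := by
    rw [sum_sub_sampleMean_sq hx, sum_sub_sampleMean_sq hy, Real.sqrt_mul (by positivity),
      Real.sqrt_mul (by positivity), mul_mul_mul_comm, Real.mul_self_sqrt (by positivity),
      mul_div_cancel_left₀ _ (by positivity), hu, Real.sqrt_mul hx1]
  have u_le_sqrt : u ≤ √u := Real.le_sqrt_of_sq_le <| by
    rw [sq]
    exact mul_le_of_le_one_left (mul_nonneg hx1 hy1) u_le
  rw [sampleCov_eq_sampleCorr_mul, normalization, ← mul_one_sub, abs_mul,
    abs_of_nonneg (sub_nonneg.2 (Real.sqrt_le_one.2 u_le))]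
  calc |sampleCorr x y| * (1 - √u) ≤ 1 * (1 - u) := by
        gcongr
        · exact sub_nonneg.2 (Real.sqrt_le_one.2 u_le)
        · exact abs_sampleCorr_le_one x y
    _ ≤ sampleMean x ^ 2 + sampleMean y ^ 2 := by
        rw [hu]
        nlinarith [mul_nonneg (sq_nonneg (sampleMean x)) (sq_nonneg (sampleMean y))]

lemma abs_sqrt_card_mul_sampleCov_sub_le [Nonempty ι] (x y : ι → ℝ) :
    |√(Fintype.card ι) * sampleCov x y - (√(Fintype.card ι))⁻¹ * ∑ i, x i * y i| ≤
      1 * √(Fintype.card ι) * (sampleMean x ^ 2 + sampleMean y ^ 2) := by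
  have hdiff : √(Fintype.card ι) * sampleCov x y - (√(Fintype.card ι))⁻¹ * ∑ i, x i * y i =
      -(√(Fintype.card ι) * (sampleMean x * sampleMean y)) := by
    rw [sampleCov_eq_mean_mul_sub, mul_sub, mul_div_left_comm, Real.sqrt_div_self', one_div,
      mul_comm (∑ i, x i * y i)]
    ring
  rw [hdiff, abs_neg, abs_mul, abs_of_nonneg (Real.sqrt_nonneg _), one_mul]
  gcongr
  rw [abs_le]
  constructor <;>
    nlinarith [sq_nonneg (sampleMean x + sampleMean y), sq_nonneg (sampleMean x - sampleMean y)]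

lemma abs_sqrt_card_mul_sampleCorr_sub_le [Nonempty ι] {x y : ι → ℝ} (hx : ∀ i, x i * x i = 1)
    (hy : ∀ i, y i * y i = 1) :
    |√(Fintype.card ι) * sampleCorr x y - (√(Fintype.card ι))⁻¹ * ∑ i, x i * y i| ≤
      2 * √(Fintype.card ι) * (sampleMean x ^ 2 + sampleMean y ^ 2) := by
  have hcov := abs_sqrt_card_mul_sampleCov_sub_le x y
  have hcorr : |√(Fintype.card ι) * sampleCorr x y - √(Fintype.card ι) * sampleCov x y| ≤
      √(Fintype.card ι) * (sampleMean x ^ 2 + sampleMean y ^ 2) := by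
    rw [← mul_sub, abs_mul, abs_of_nonneg (Real.sqrt_nonneg _)]
    gcongr
    exact abs_sampleCorr_sub_sampleCov_le hx hy
  refine (abs_sub_le _ (√(Fintype.card ι) * sampleCov x y) _).trans ?_
  linarith

lemma measurable_sampleCov :
    Measurable fun p : (ι → ℝ) × (ι → ℝ) => sampleCov p.1 p.2 := by
  unfold sampleCov sampleMean
  fun_prop

lemma measurable_sampleCorr :
    Measurable fun p : (ι → ℝ) × (ι → ℝ) => sampleCorr p.1 p.2 := by
  unfold sampleCorr sampleMean
  fun_prop

end SampleStatistics

lemma tanh_pos {x : ℝ} (hx : 0 < x) : 0 < Real.tanh x := by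
  rw [Real.tanh_eq_sinh_div_cosh]
  exact div_pos (Real.sinh_pos_iff.2 hx) (Real.cosh_pos x)

lemma exp_mul_mul_sub_tanh {σ : ℝ} (hσ : σ * σ = 1) (θ : ℝ) :
    Real.exp (θ * σ) * (σ - Real.tanh θ) = σ / Real.cosh θ := by
  have := Real.cosh_pos θ
  have := Real.cosh_sq θ
  rw [Real.tanh_eq_sinh_div_cosh]
  rcases mul_self_eq_one_iff.1 hσ with rfl | rfl
  · rw [mul_one, ← Real.cosh_add_sinh]
    field_simp
    linarith
  · rw [mul_neg_one, ← Real.cosh_sub_sinh]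
    field_simp
    linarith

section Ising

variable {ι : Type*}

lemma spin_mul_spin_add_le_inf_add_sup (a b : ι → Bool) (i j : ι) :
    spin i a * spin j a + spin i b * spin j b ≤
      spin i (a ⊓ b) * spin j (a ⊓ b) + spin i (a ⊔ b) * spin j (a ⊔ b) := by
  cases hai : a i <;> cases haj : a j <;> cases hbi : b i <;> cases hbj : b j <;>
    norm_num [spin, pmVec, hai, haj, hbi, hbj]

lemma pmVec_compl (s : ι → Bool) : pmVec sᶜ = -pmVec s := by
  ext i
  cases h : s i <;> simp [pmVec, h]

variable [Fintype ι]

lemma isingWeight_pos (β : ℝ) (Q : Matrix ι ι ℝ) (z : ι → ℝ) : 0 < isingWeight β Q z :=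
  Real.exp_pos _

lemma dotProduct_mulVec_eq_sum (Q : Matrix ι ι ℝ) (z : ι → ℝ) :
    z ⬝ᵥ Q.mulVec z = ∑ i, ∑ j, Q i j * (z i * z j) := by
  simp only [dotProduct, Matrix.mulVec, Finset.mul_sum, mul_left_comm]

lemma isingWeight_mul_le {β : ℝ} (hβ : 0 ≤ β) {Q : Matrix ι ι ℝ} (hQ : ∀ i j, 0 ≤ Q i j)
    (a b : ι → Bool) :
    isingWeight β Q (pmVec a) * isingWeight β Q (pmVec b) ≤
      isingWeight β Q (pmVec (a ⊓ b)) * isingWeight β Q (pmVec (a ⊔ b)) := by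
  simp only [isingWeight]
  rw [← Real.exp_add, ← Real.exp_add, Real.exp_le_exp, ← mul_add, ← mul_add]
  refine mul_le_mul_of_nonneg_left ?_ (by positivity)
  simp only [dotProduct_mulVec_eq_sum, ← Finset.sum_add_distrib, ← mul_add]
  exact Finset.sum_le_sum fun i _ => Finset.sum_le_sum fun j _ =>
    mul_le_mul_of_nonneg_left (spin_mul_spin_add_le_inf_add_sup a b i j) (hQ i j)

lemma isingWeight_pmVec_compl (β : ℝ) (Q : Matrix ι ι ℝ) (s : ι → Bool) :
    isingWeight β Q (pmVec sᶜ) = isingWeight β Q (pmVec s) := by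
  rw [isingWeight, isingWeight, pmVec_compl, Matrix.mulVec_neg, dotProduct_neg, neg_dotProduct,
    neg_neg]

variable [DecidableEq ι]

lemma isingZ_pos (β : ℝ) (Q : Matrix ι ι ℝ) : 0 < isingZ ι β Q :=
  Finset.sum_pos (fun _ _ => isingWeight_pos _ _ _) Finset.univ_nonempty

/-- The Ising measure as a law on boolean configurations, which form a lattice; its image under
`pmVec` is `isingMeasure`. -/
def isingSpin (β : ℝ) (Q : Matrix ι ι ℝ) : Measure (ι → Bool) :=
  ∑ s : ι → Bool, ENNReal.ofReal (isingWeight β Q (pmVec s) / isingZ ι β Q) • Measure.dirac s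

variable (β : ℝ) (Q : Matrix ι ι ℝ)

lemma isingSpin_real_singleton (s : ι → Bool) :
    (isingSpin β Q).real {s} = isingWeight β Q (pmVec s) / isingZ ι β Q := by
  have weight_nonneg : 0 ≤ isingWeight β Q (pmVec s) / isingZ ι β Q :=
    (div_pos (isingWeight_pos _ _ _) (isingZ_pos _ _)).le
  simp [Measure.real, isingSpin, Measure.coe_finsetSum, Set.indicator_apply, weight_nonneg]

instance isProbabilityMeasure_isingSpin : IsProbabilityMeasure (isingSpin β Q) := by
  constructor
  simp only [isingSpin, Measure.coe_finsetSum, Finset.sum_apply, Measure.smul_apply, smul_eq_mul,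
    measure_univ, mul_one]
  rw [← ENNReal.ofReal_sum_of_nonneg
    fun s _ => (div_pos (isingWeight_pos _ _ _) (isingZ_pos _ _)).le, ← Finset.sum_div, ← isingZ,
    div_self (isingZ_pos β Q).ne', ENNReal.ofReal_one]

lemma integral_isingSpin (f : (ι → Bool) → ℝ) :
    ∫ s, f s ∂isingSpin β Q = (∑ s, isingWeight β Q (pmVec s) * f s) / isingZ ι β Q := by
  rw [integral_fintype .of_finite, Finset.sum_div]
  simp only [isingSpin_real_singleton, smul_eq_mul, div_mul_eq_mul_div]

lemma integral_spin_isingSpin (i : ι) : ∫ s, spin i s ∂isingSpin β Q = 0 := by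
  have flip : ∑ s, isingWeight β Q (pmVec s) * spin i s =
      ∑ s, -(isingWeight β Q (pmVec s) * spin i s) := by
    refine Fintype.sum_equiv (compl_involutive.toPerm (compl : (ι → Bool) → (ι → Bool))) _ _
      fun s => ?_
    have weight : isingWeight β Q (pmVec sᶜ) = isingWeight β Q (pmVec s) :=
      isingWeight_pmVec_compl β Q s
    change _ = -(isingWeight β Q (pmVec sᶜ) * pmVec sᶜ i)
    rw [weight, pmVec_compl, Pi.neg_apply, mul_neg, neg_neg, spin]
  rw [Finset.sum_neg_distrib] at flip
  rw [integral_isingSpin, self_eq_neg.1 flip, zero_div]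

lemma isLogSupermodular_isingSpin {β : ℝ} (hβ : 0 ≤ β) {Q : Matrix ι ι ℝ}
    (hQ : ∀ i j, 0 ≤ Q i j) : IsLogSupermodular (isingSpin β Q) := fun a b => by
  simp only [isingSpin_real_singleton, div_mul_div_comm]
  exact div_le_div_of_nonneg_right (isingWeight_mul_le hβ hQ a b)
    (mul_pos (isingZ_pos _ _) (isingZ_pos _ _)).le

lemma map_pmVec_isingSpin : (isingSpin β Q).map pmVec = isingMeasure ι β Q := by
  rw [isingSpin, Measure.map_finset_sum' Measurable.of_discrete.aemeasurable]
  simp only [Measure.map_smul, Measure.map_dirac' Measurable.of_discrete, isingMeasure]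

lemma coordCov_isingMeasure (i j : ι) :
    coordCov (isingMeasure ι β Q) i j = cov[spin i, spin j; isingSpin β Q] := by
  have integral_eq {f : (ι → ℝ) → ℝ} (hf : Continuous f) :
      ∫ z, f z ∂isingMeasure ι β Q = ∫ s, f (pmVec s) ∂isingSpin β Q := by
    rw [← map_pmVec_isingSpin, integral_map Measurable.of_discrete.aemeasurable
      hf.aestronglyMeasurable]
  rw [covariance_eq_sub .of_discrete .of_discrete, coordCov, integral_eq (by fun_prop),
    integral_eq (by fun_prop), integral_eq (by fun_prop)]
  rfl

lemma map_isingMeasure_prod {β₁ β₂ : ℝ} {Q : Matrix ι ι ℝ} {α : Type*} [MeasurableSpace α]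
    {f : (ι → ℝ) × (ι → ℝ) → α} (hf : Measurable f) :
    ((isingMeasure ι β₁ Q).prod (isingMeasure ι β₂ Q)).map f =
      ((isingSpin β₁ Q).prod (isingSpin β₂ Q)).map fun p => f (pmVec p.1, pmVec p.2) := by
  rw [← map_pmVec_isingSpin, ← map_pmVec_isingSpin,
    Measure.map_prod_map _ _ Measurable.of_discrete Measurable.of_discrete,
    Measure.map_map hf Measurable.of_discrete]
  rfl

lemma isingWeight_add_single_add_single (i j : ι) (a b : ℝ) (z : ι → ℝ) :
    isingWeight β (Q + Matrix.single i j a + Matrix.single j i b) z =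
      isingWeight β Q z * Real.exp (β * (a + b) / 2 * (z i * z j)) := by
  rw [isingWeight, isingWeight, ← Real.exp_add]
  simp only [Matrix.add_mulVec, dotProduct_add, Matrix.single_mulVec_eq, dotProduct_smul,
    dotProduct_single_one, smul_eq_mul]
  ring_nf

lemma covariance_isingSpin (i j : ι) : cov[spin i, spin j; isingSpin β Q] =
    (∑ s, isingWeight β Q (pmVec s) * (spin i s * spin j s)) / isingZ ι β Q := by
  rw [covariance_of_integral_eq_zero (integral_spin_isingSpin β Q i)
    (integral_spin_isingSpin β Q j), integral_isingSpin]

lemma sum_isingWeight_mul_spin_mul_spin_nonneg {β : ℝ} (hβ : 0 ≤ β) {Q : Matrix ι ι ℝ}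
    (hQ : ∀ i j, 0 ≤ Q i j) (i j : ι) :
    0 ≤ ∑ s, isingWeight β Q (pmVec s) * (spin i s * spin j s) := by
  have cov_nonneg := (isLogSupermodular_isingSpin hβ hQ).covariance_spin_nonneg i j
  rw [covariance_isingSpin] at cov_nonneg
  have := (le_div_iff₀ (isingZ_pos β Q)).1 cov_nonneg
  rwa [zero_mul] at this

lemma tanh_le_covariance_isingSpin {β : ℝ} (hβ : 0 ≤ β) {Q : Matrix ι ι ℝ}
    (hQ : ∀ i j, 0 ≤ Q i j) {i j : ι} (hij : i ≠ j) :
    Real.tanh (β * (Q i j + Q j i) / 2) ≤ cov[spin i, spin j; isingSpin β Q] := by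
  set θ := β * (Q i j + Q j i) / 2
  obtain ⟨Q', hQ', hQQ'⟩ : ∃ Q' : Matrix ι ι ℝ, (∀ k l, 0 ≤ Q' k l) ∧
      Q = Q' + Matrix.single i j (Q i j) + Matrix.single j i (Q j i) := by
    refine ⟨Q - Matrix.single j i (Q j i) - Matrix.single i j (Q i j), fun k l => ?_, by abel⟩
    simp only [Matrix.sub_apply, Matrix.single_apply]
    split_ifs with hji hij' hij' <;> simp_all
  have weight_eq (s : ι → Bool) : isingWeight β Q (pmVec s) =
      isingWeight β Q' (pmVec s) * Real.exp (θ * (spin i s * spin j s)) := by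
    conv_lhs => rw [hQQ', isingWeight_add_single_add_single]
    rfl
  -- `exp (θ σ) (σ - tanh θ)` is a positive multiple of `σ`, so averaging it against the weight
  -- without the bond gives a positive multiple of a covariance.
  have sum_eq : ∑ s, isingWeight β Q (pmVec s) * (spin i s * spin j s - Real.tanh θ) =
      (∑ s, isingWeight β Q' (pmVec s) * (spin i s * spin j s)) / Real.cosh θ := by
    have sq_eq_one (s : ι → Bool) : spin i s * spin j s * (spin i s * spin j s) = 1 := by
      rw [mul_mul_mul_comm, spin_mul_self, spin_mul_self, one_mul]
    simp only [weight_eq, mul_assoc, Finset.sum_div, mul_div_assoc]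
    refine Finset.sum_congr rfl fun s _ => ?_
    rw [exp_mul_mul_sub_tanh (sq_eq_one s), mul_div_assoc]
  have sum_nonneg := div_nonneg (sum_isingWeight_mul_spin_mul_spin_nonneg hβ hQ' i j)
    (Real.cosh_pos θ).le
  rw [← sum_eq] at sum_nonneg
  simp only [mul_sub, Finset.sum_sub_distrib, ← Finset.sum_mul] at sum_nonneg
  rw [covariance_isingSpin, le_div_iff₀ (isingZ_pos β Q), mul_comm]
  exact sub_nonneg.1 sum_nonneg

end Ising

section LatticeIsing

lemma latticeRadius_nonneg (d n : ℕ) : 0 ≤ latticeRadius d n :=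
  Int.floor_nonneg.2 (by positivity)

lemma mem_latticeBox {d n : ℕ} {i : Fin d → ℤ} :
    i ∈ latticeBox d n ↔ ∀ k, |i k| ≤ latticeRadius d n := by
  simp only [latticeBox, Fintype.mem_piFinset, Finset.mem_Icc, abs_le]

instance nonempty_latticeVertex (d n : ℕ) : Nonempty (LatticeVertex d n) :=
  ⟨0, mem_latticeBox.2 fun _ => by simpa using latticeRadius_nonneg d n⟩

lemma card_latticeVertex (d n : ℕ) : Fintype.card (LatticeVertex d n) = latticeN d n :=
  Fintype.card_coe _

lemma latticeN_eq (d n : ℕ) : (latticeN d n : ℝ) = (2 * latticeRadius d n + 1) ^ d := by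
  have card_Icc : ((latticeRadius d n + 1 - -latticeRadius d n).toNat : ℤ) =
      2 * latticeRadius d n + 1 := by
    rw [Int.toNat_of_nonneg (by linarith [latticeRadius_nonneg d n])]
    ring
  rw [latticeN, latticeBox, Fintype.card_piFinset_const, Int.card_Icc, Nat.cast_pow]
  exact_mod_cast congrArg (· ^ d) card_Icc

lemma le_latticeN {d : ℕ} (hd : 1 ≤ d) (n : ℕ) : (n : ℝ) ≤ latticeN d n := by
  have rpow_le : (n : ℝ) ^ ((1 : ℝ) / d) ≤ 2 * latticeRadius d n + 1 := by
    have lt_floor_add_one : (n : ℝ) ^ ((1 : ℝ) / d) < latticeRadius d n + 1 :=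
      Int.lt_floor_add_one _
    have radius_nonneg : (0 : ℝ) ≤ latticeRadius d n := Int.cast_nonneg (latticeRadius_nonneg d n)
    linarith
  calc (n : ℝ) = ((n : ℝ) ^ ((1 : ℝ) / d)) ^ d := by
        rw [one_div, Real.rpow_inv_natCast_pow (by positivity) (by positivity)]
    _ ≤ (2 * latticeRadius d n + 1) ^ d := pow_le_pow_left₀ (by positivity) rpow_le d
    _ = latticeN d n := (latticeN_eq d n).symm

lemma tendsto_latticeN {d : ℕ} (hd : 1 ≤ d) :
    Tendsto (fun n => (latticeN d n : ℝ)) atTop atTop :=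
  tendsto_atTop_mono (le_latticeN hd) tendsto_natCast_atTop_atTop

lemma one_le_latticeRadius (d : ℕ) {n : ℕ} (hn : 1 ≤ n) : 1 ≤ latticeRadius d n :=
  Int.le_floor.2 (by simpa using Real.one_le_rpow (Nat.one_le_cast.2 hn) (by positivity))

lemma exists_l1dist_eq_one {d n : ℕ} (hd : 1 ≤ d) (hn : 1 ≤ n) (i : LatticeVertex d n) :
    ∃ j : LatticeVertex d n, l1dist i.1 j.1 = 1 := by
  let k₀ : Fin d := ⟨0, hd⟩
  have hi := mem_latticeBox.1 i.2
  -- Step towards the hyperplane `i k₀ = 0`, which cannot leave the box.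
  obtain ⟨e, he, hie⟩ : ∃ e : ℤ, |e| = 1 ∧ |i.1 k₀ + e| ≤ latticeRadius d n := by
    have hR := one_le_latticeRadius d hn
    have hk := abs_le.1 (hi k₀)
    rcases le_total 0 (i.1 k₀) with h | h
    · exact ⟨-1, by simp, abs_le.2 ⟨by linarith, by linarith⟩⟩
    · exact ⟨1, by simp, abs_le.2 ⟨by linarith, by linarith⟩⟩
  refine ⟨⟨i.1 + Pi.single k₀ e, mem_latticeBox.2 fun k => ?_⟩, ?_⟩
  · rcases eq_or_ne k k₀ with rfl | hk
    · simpa using hie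
    · simpa [hk] using hi k
  · simp [l1dist, Pi.single_apply, apply_ite abs, he]

variable {d n : ℕ}

lemma ne_of_l1dist_eq_one {i j : LatticeVertex d n} (hij : l1dist i.1 j.1 = 1) : i ≠ j := by
  rintro rfl
  simp [l1dist_self] at hij

lemma latticeQ_nonneg (i j : LatticeVertex d n) : 0 ≤ latticeQ d n i j := by
  rw [latticeQ]
  positivity

lemma isDecayingSpinField_latticeQ {β c : ℝ} (hβ : 0 ≤ β)
    (hdec : ∀ i j : LatticeVertex d n, i ≠ j →
      coordCov (latticeIsing d n β) i j ≤ Real.exp (-c * (l1dist i.1 j.1 : ℝ))) :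
    IsDecayingSpinField c (isingSpin β (latticeQ d n)) where
  isProbabilityMeasure := inferInstance
  isLogSupermodular := isLogSupermodular_isingSpin hβ latticeQ_nonneg
  integral_spin := integral_spin_isingSpin _ _
  covariance_spin_le i j hij := coordCov_isingMeasure β (latticeQ d n) i j ▸ hdec i j hij

lemma tanh_le_covariance_latticeQ {β : ℝ} (hβ : 0 ≤ β) {i j : LatticeVertex d n}
    (hij : l1dist i.1 j.1 = 1) :
    Real.tanh β ≤ cov[spin i, spin j; isingSpin β (latticeQ d n)] := by
  have bound := tanh_le_covariance_isingSpin hβ latticeQ_nonneg (ne_of_l1dist_eq_one hij)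
  rwa [latticeQ, latticeQ, if_pos hij, if_pos (l1dist_comm _ _ ▸ hij), mul_div_assoc,
    one_add_one_eq_two, div_self two_ne_zero, mul_one] at bound

lemma tanh_mul_tanh_le_covOverlap {β₁ β₂ : ℝ} (hβ₁ : 0 < β₁) (hβ₂ : 0 < β₂) (hd : 1 ≤ d)
    (hn : 1 ≤ n) :
    Real.tanh β₁ * Real.tanh β₂ ≤
      covOverlap (isingSpin β₁ (latticeQ d n)) (isingSpin β₂ (latticeQ d n)) := by
  have cov_nonneg {β : ℝ} (hβ : 0 < β) (i j : LatticeVertex d n) :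
      0 ≤ cov[spin i, spin j; isingSpin β (latticeQ d n)] :=
    (isLogSupermodular_isingSpin hβ.le latticeQ_nonneg).covariance_spin_nonneg i j
  refine le_covOverlap (cov_nonneg hβ₁) (cov_nonneg hβ₂) fun i => ?_
  obtain ⟨j, hij⟩ := exists_l1dist_eq_one hd hn i
  exact ⟨j, ne_of_l1dist_eq_one hij, mul_le_mul (tanh_le_covariance_latticeQ hβ₁.le hij)
    (tanh_le_covariance_latticeQ hβ₂.le hij) (tanh_pos hβ₂).le (cov_nonneg hβ₁ i j)⟩

lemma covOverlap_latticeQ (β₁ β₂ : ℝ) :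
    covOverlap (isingSpin β₁ (latticeQ d n)) (isingSpin β₂ (latticeQ d n)) =
      (latticeN d n : ℝ)⁻¹ * ∑ i : LatticeVertex d n, ∑ j : LatticeVertex d n,
        if i ≠ j then
          coordCov (latticeIsing d n β₁) i j * coordCov (latticeIsing d n β₂) i j
        else 0 := by
  simp only [covOverlap, latticeIsing, coordCov_isingMeasure, Fintype.card_coe, latticeN]

lemma tendstoInDistribution_latticeIsing {β₁ β₂ c κ : ℝ} (hd : 1 ≤ d) (hβ₁ : 0 ≤ β₁)
    (hβ₂ : 0 ≤ β₂) (hc : 0 < c)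
    (hdec₁ : ∀ n (i j : LatticeVertex d n), i ≠ j →
      coordCov (latticeIsing d n β₁) i j ≤ Real.exp (-c * (l1dist i.1 j.1 : ℝ)))
    (hdec₂ : ∀ n (i j : LatticeVertex d n), i ≠ j →
      coordCov (latticeIsing d n β₂) i j ≤ Real.exp (-c * (l1dist i.1 j.1 : ℝ)))
    (hκ : Tendsto (fun n => covOverlap (isingSpin β₁ (latticeQ d n)) (isingSpin β₂ (latticeQ d n)))
      atTop (𝓝 κ))
    {S : ∀ n, (LatticeVertex d n → ℝ) × (LatticeVertex d n → ℝ) → ℝ} (hS : ∀ n, Measurable (S n))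
    {C : ℝ}
    (hSC : ∀ n (x y : LatticeVertex d n → ℝ), (∀ i, x i * x i = 1) → (∀ i, y i * y i = 1) →
      |S n (x, y) - (√(latticeN d n))⁻¹ * ∑ i, x i * y i| ≤
        C * √(latticeN d n) * (sampleMean x ^ 2 + sampleMean y ^ 2)) :
    _root_.TendstoInDistribution
      (fun n => ((latticeIsing d n β₁).prod (latticeIsing d n β₂)).map (S n))
      (gaussianReal 0 (1 + κ).toNNReal) := by
  simp only [latticeIsing, map_isingMeasure_prod (hS _)]
  exact IsDecayingSpinField.tendstoInDistribution_of_abs_sub_le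
    (fun n => isDecayingSpinField_latticeQ hβ₁ (hdec₁ n))
    (fun n => isDecayingSpinField_latticeQ hβ₂ (hdec₂ n)) hc (tendsto_latticeN hd) hκ
    fun n p => hSC n _ _ (fun i => spin_mul_self i p.1) fun i => spin_mul_self i p.2

end LatticeIsing

/-- **Theorem 1 (nonsense correlation on lattices).** Let `X ~ P_{β₁,Q(Λ_{n,d})}` and
`Y ~ P_{β₂,Q(Λ_{n,d})}` be independent, with nonnegative pairwise covariances decaying
exponentially (rate `c > 0`), sample means tending to `0` in probability, and
`(1/Nₙ) Σ_{i≠j} Cov(Xᵢ,Xⱼ)Cov(Yᵢ,Yⱼ) → κ`. Then `κ > 0`, `√Nₙ · Tₙ →d N(0, 1+κ)` with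
`1 + κ > 1`, and `√Nₙ · ρₙ →d N(0, 1+κ)`. -/
theorem lattice_nonsense_correlation
    (d : ℕ) (hd : 1 ≤ d) (β₁ β₂ : ℝ) (hβ₁ : 0 < β₁) (hβ₂ : 0 < β₂)
    (c : ℝ) (hc : 0 < c)
    (hposX : ∀ n (i j : LatticeVertex d n), i ≠ j →
      0 ≤ coordCov (latticeIsing d n β₁) i j)
    (hposY : ∀ n (i j : LatticeVertex d n), i ≠ j →
      0 ≤ coordCov (latticeIsing d n β₂) i j)
    (hdecX : ∀ n (i j : LatticeVertex d n), i ≠ j →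
      coordCov (latticeIsing d n β₁) i j ≤ Real.exp (-c * (l1dist i.1 j.1 : ℝ)))
    (hdecY : ∀ n (i j : LatticeVertex d n), i ≠ j →
      coordCov (latticeIsing d n β₂) i j ≤ Real.exp (-c * (l1dist i.1 j.1 : ℝ)))
    (hmeanX : TendstoInProbability
      (fun n => Measure.map (sampleMean (ι := LatticeVertex d n)) (latticeIsing d n β₁)) 0)
    (hmeanY : TendstoInProbability
      (fun n => Measure.map (sampleMean (ι := LatticeVertex d n)) (latticeIsing d n β₂)) 0)
    (κ : ℝ)
    (hκ : Tendsto
      (fun n => (latticeN d n : ℝ)⁻¹ *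
        ∑ i : LatticeVertex d n, ∑ j : LatticeVertex d n,
          if i ≠ j then
            coordCov (latticeIsing d n β₁) i j * coordCov (latticeIsing d n β₂) i j
          else 0)
      atTop (𝓝 κ)) :
    0 < κ ∧ 1 < 1 + κ ∧
    TendstoInDistribution
      (fun n => Measure.map
        (fun p : (LatticeVertex d n → ℝ) × (LatticeVertex d n → ℝ) =>
          Real.sqrt (latticeN d n) * sampleCov p.1 p.2)
        ((latticeIsing d n β₁).prod (latticeIsing d n β₂)))
      (gaussianReal 0 (Real.toNNReal (1 + κ))) ∧
    TendstoInDistribution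
      (fun n => Measure.map
        (fun p : (LatticeVertex d n → ℝ) × (LatticeVertex d n → ℝ) =>
          Real.sqrt (latticeN d n) * sampleCorr p.1 p.2)
        ((latticeIsing d n β₁).prod (latticeIsing d n β₂)))
      (gaussianReal 0 (Real.toNNReal (1 + κ))) := by
  simp only [← covOverlap_latticeQ] at hκ
  have κ_pos : 0 < κ := (mul_pos (tanh_pos hβ₁) (tanh_pos hβ₂)).trans_le <| ge_of_tendsto hκ <|
    (eventually_ge_atTop 1).mono fun n hn => tanh_mul_tanh_le_covOverlap hβ₁ hβ₂ hd hn
  refine ⟨κ_pos, lt_add_of_pos_right 1 κ_pos, ?_, ?_⟩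
  · refine tendstoInDistribution_latticeIsing hd hβ₁.le hβ₂.le hc hdecX hdecY hκ
      (fun n => measurable_sampleCov.const_mul _) (C := 1) fun n x y _ _ => ?_
    simpa only [card_latticeVertex] using abs_sqrt_card_mul_sampleCov_sub_le x y
  · refine tendstoInDistribution_latticeIsing hd hβ₁.le hβ₂.le hc hdecX hdecY hκ
      (fun n => measurable_sampleCorr.const_mul _) (C := 2) fun n x y hx hy => ?_
    simpa only [card_latticeVertex] using abs_sqrt_card_mul_sampleCorr_sub_le hx hy

end
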